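/- arXiv:0807.1170 — 6 statements merged into one kernel-verified Lean document; each statement's English description precedes it below -/
import Mathlib

section
/- Let d, e ∈ ℚ₂* with v₂(d) = 1 and v₂(e) = 3, and suppose de ∉ (ℚ₂*)² (so ℚ₂(√d) and ℚ₂(√e) are non-isomorphic quadratic extensions of ℚ₂). Let L = ℚ₂(√d). Then at least one of the three elements −1, 1 − e/4, e does not belong to N_{L/ℚ₂}(L*). -/
open Module

/-- `normGroup K L` is the set of norms `N_{L/K}(t)` of nonzero elements `t ∈ L`. -/
def normGroup (K L : Type*) [Field K] [Field L] [Algebra K L] : Set K :=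
  {x : K | ∃ t : L, t ≠ 0 ∧ Algebra.norm K t = x}

/-- Every norm from a quadratic extension generated by a square root of `d` is of the form
`x ^ 2 - d * y ^ 2`. -/
lemma exists_norm_eq_sq_sub_mul_sq {K L : Type*} [Field K] [Field L] [Algebra K L]
    (hL : finrank K L = 2) {d : K} (hd : ¬ IsSquare d) {s : L} (hs : s ^ 2 = algebraMap K L d)
    (t : L) : ∃ x y : K, Algebra.norm K t = x ^ 2 - d * y ^ 2 := by
  have hli : LinearIndependent K ![(1 : L), s] := by
    rw [LinearIndependent.pair_iff' one_ne_zero]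
    intro a ha
    rw [← Algebra.algebraMap_eq_smul_one] at ha
    refine hd ⟨a, (algebraMap K L).injective ?_⟩
    rw [← hs, ← ha, map_mul, sq]
  let b : Basis (Fin 2) K L := basisOfLinearIndependentOfCardEqFinrank hli (by simp [hL])
  have hb0 : b 0 = 1 := by simp [b]
  have hb1 : b 1 = s := by simp [b]
  have ht : t = b.repr t 0 • b 0 + b.repr t 1 • b 1 := by
    rw [← Fin.sum_univ_two (fun i ↦ b.repr t i • b i), b.sum_repr]
  generalize b.repr t 0 = x at ht
  generalize b.repr t 1 = y at ht
  have h0 : t * b 0 = x • b 0 + y • b 1 := by rw [hb0, mul_one, ← hb0]; exact ht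
  have h1 : t * b 1 = (d * y) • b 0 + x • b 1 := by
    rw [ht, hb0, hb1]
    simp only [Algebra.smul_def, map_mul, ← hs]
    ring
  refine ⟨x, y, ?_⟩
  rw [Algebra.norm_eq_matrix_det b, Matrix.det_fin_two]
  simp only [Algebra.leftMulMatrix_eq_repr_mul, h0, h1, map_add, map_smul, Basis.repr_self,
    Finsupp.add_apply, Finsupp.smul_apply]
  simp
  ring

namespace Padic

variable {p : ℕ} [Fact p.Prime]

lemma not_isSquare_of_odd_valuation {d : ℚ_[p]} (hd : Odd d.valuation) : ¬ IsSquare d := by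
  rintro ⟨a, rfl⟩
  rcases eq_or_ne a 0 with rfl | ha
  · simp at hd
  · rw [valuation_mul ha ha] at hd
    exact Int.not_odd_iff_even.mpr ⟨_, rfl⟩ hd

/-- If `d` has valuation one, an integral value of the form `x ^ 2 - d * y ^ 2` is attained only
at integral `x` and `y`. -/
lemma norm_le_one_of_norm_sq_sub_mul_sq_le_one {d x y : ℚ_[p]} (hd : d.valuation = 1)
    (h : ‖x ^ 2 - d * y ^ 2‖ ≤ 1) : ‖x‖ ≤ 1 ∧ ‖y‖ ≤ 1 := by
  have hd0 : d ≠ 0 := by rintro rfl; simp at hd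
  rcases eq_or_ne y 0 with rfl | hy
  · simpa using h
  have hvy : (d * y ^ 2).valuation = 1 + 2 * y.valuation := by
    rw [valuation_mul hd0 (pow_ne_zero 2 hy), valuation_pow, hd]; simp
  have hne : ‖x ^ 2‖ ≠ ‖-(d * y ^ 2)‖ := by
    rw [norm_neg]
    intro heq
    have hdy : d * y ^ 2 ≠ 0 := mul_ne_zero hd0 (pow_ne_zero 2 hy)
    have hx : x ^ 2 ≠ 0 := by rwa [← norm_ne_zero_iff, heq, norm_ne_zero_iff]
    have hp : (1 : ℝ) < p := by exact_mod_cast (Fact.out : p.Prime).one_lt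
    rw [norm_eq_zpow_neg_valuation hx, norm_eq_zpow_neg_valuation hdy, hvy, valuation_pow] at heq
    have := zpow_right_injective₀ (by positivity) hp.ne' heq
    push_cast at this
    omega
  rw [sub_eq_add_neg, add_eq_max_of_ne hne, max_le_iff, norm_neg,
    norm_le_one_iff_val_nonneg (d * y ^ 2), hvy, norm_pow] at h
  refine ⟨(pow_le_one_iff_of_nonneg (norm_nonneg x) two_ne_zero).mp h.1, ?_⟩
  rw [norm_le_one_iff_val_nonneg]
  omega

/-- A `p`-adic number whose valuation is that of `p ^ n` is `p ^ n` times a unit. -/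
lemma exists_unit_of_valuation_eq {a : ℚ_[p]} (ha : a ≠ 0) {n : ℕ} (hn : a.valuation = n) :
    ∃ u : ℤ_[p]ˣ, a = p ^ n * (u : ℤ_[p]) := by
  have hp : (p : ℚ_[p]) ≠ 0 := by exact_mod_cast (Fact.out : p.Prime).ne_zero
  have hnorm : ‖a / p ^ n‖ = 1 := by
    rw [norm_div, norm_eq_zpow_neg_valuation ha, hn, norm_pow, norm_p, zpow_neg, inv_pow,
      zpow_natCast, div_self]
    have : (p : ℝ) ≠ 0 := by exact_mod_cast (Fact.out : p.Prime).ne_zero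
    positivity
  refine ⟨PadicInt.mkUnits hnorm, ?_⟩
  rw [PadicInt.mkUnits_eq]
  field_simp

end Padic

namespace PadicInt

/-- A 2-adic integer congruent to `1` modulo `8` is a square. -/
lemma isSquare_of_toZModPow_three_eq_one {c : ℤ_[2]} (hc : toZModPow 3 c = 1) : IsSquare c := by
  have hmem : 1 - c ∈ Ideal.span {((2 : ℕ) : ℤ_[2]) ^ 3} := by
    rw [← ker_toZModPow, RingHom.mem_ker, map_sub, hc, map_one, sub_self]
  have hnorm : ‖1 - c‖ ≤ 1 / 8 := by
    have := (norm_le_pow_iff_mem_span_pow (1 - c) 3).mpr hmem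
    norm_num [zpow_neg] at this ⊢
    exact this
  have htwo : ‖(2 : ℤ_[2])‖ = 1 / 2 := by
    have := norm_p (p := 2)
    norm_num at this ⊢
    exact this
  obtain ⟨z, hz, -⟩ := hensels_lemma (F := (Polynomial.X ^ 2 - Polynomial.C c : Polynomial ℤ_[2]))
    (a := (1 : ℤ_[2])) (by
      simp only [map_sub, map_pow, Polynomial.aeval_X, Polynomial.aeval_C, one_pow,
        Algebra.algebraMap_self, RingHom.id_apply, Polynomial.derivative_X_pow,
        Polynomial.derivative_C, sub_zero]
      norm_num [htwo]
      linarith)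
  refine ⟨z, ?_⟩
  simp only [map_sub, map_pow, Polynomial.aeval_X, Polynomial.aeval_C,
    Algebra.algebraMap_self, RingHom.id_apply] at hz
  rw [← sq, sub_eq_zero.mp hz]

end PadicInt

/-- Reduction modulo `8` of the representation of a 2-adic integer by `x ^ 2 - 2 * u * y ^ 2`. -/
lemma exists_zmod_eight_eq_sq_sub {u a : ℤ_[2]} (hu : (2 * u : ℚ_[2]).valuation = 1)
    (h : ∃ x y : ℚ_[2], (a : ℚ_[2]) = x ^ 2 - (2 * u) * y ^ 2) :
    ∃ x y : ZMod 8, PadicInt.toZModPow (p := 2) 3 a =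
      x ^ 2 - 2 * PadicInt.toZModPow (p := 2) 3 u * y ^ 2 := by
  obtain ⟨x, y, hxy⟩ := h
  obtain ⟨hx, hy⟩ := Padic.norm_le_one_of_norm_sq_sub_mul_sq_le_one hu
    (x := x) (y := y) (hxy ▸ a.norm_le_one)
  obtain ⟨x, rfl⟩ : ∃ x₀ : ℤ_[2], (x₀ : ℚ_[2]) = x := ⟨⟨x, hx⟩, rfl⟩
  obtain ⟨y, rfl⟩ : ∃ y₀ : ℤ_[2], (y₀ : ℚ_[2]) = y := ⟨⟨y, hy⟩, rfl⟩
  have key : a = x ^ 2 - 2 * u * y ^ 2 := by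
    apply Subtype.ext
    rw [hxy]
    rfl
  refine ⟨PadicInt.toZModPow (p := 2) 3 x, PadicInt.toZModPow (p := 2) 3 y, ?_⟩
  rw [key]
  simp only [map_sub, map_mul, map_pow, map_ofNat]

lemma zmod_eight_mul_eq_one {u w : ZMod 8} (hu : IsUnit u) (hw : IsUnit w)
    (h₁ : ∃ x y : ZMod 8, -1 = x ^ 2 - 2 * u * y ^ 2)
    (h₂ : ∃ x y : ZMod 8, 1 - 2 * w = x ^ 2 - 2 * u * y ^ 2)
    (h₃ : ∃ x y : ZMod 8, -(u * w) = x ^ 2 - 2 * u * y ^ 2) : u * w = 1 := by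
  rw [isUnit_iff_exists_inv] at hu hw
  revert u w
  decide +kernel

/-- Lemma 4.2(ii): let `d, e ∈ ℚ₂*` with `v₂(d) = 1`, `v₂(e) = 3` and `de ∉ (ℚ₂*)²`,
and let `L = ℚ₂(√d)`. Then at least one of `-1`, `1 - e/4`, `e` is not a norm from `L`. -/
theorem stmt_11 (d e : ℚ_[2]) (hd0 : d ≠ 0) (he0 : e ≠ 0)
    (hvd : d.valuation = 1) (hve : e.valuation = 3)
    (hde : ¬ IsSquare (d * e))
    (L : Type*) [Field L] [Algebra ℚ_[2] L] (hL2 : finrank ℚ_[2] L = 2)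
    (hLd : ∃ s : L, s ^ 2 = algebraMap ℚ_[2] L d) :
    (-1 : ℚ_[2]) ∉ normGroup ℚ_[2] L ∨ (1 - e / 4) ∉ normGroup ℚ_[2] L ∨
      e ∉ normGroup ℚ_[2] L := by
  by_contra! hcon
  obtain ⟨⟨t₁, -, h₁⟩, ⟨t₂, -, h₂⟩, ⟨t₃, -, h₃⟩⟩ := hcon
  obtain ⟨s, hs⟩ := hLd
  have hrep := exists_norm_eq_sq_sub_mul_sq hL2
    (Padic.not_isSquare_of_odd_valuation (by rw [hvd]; exact odd_one)) hs
  obtain ⟨u, rfl⟩ := Padic.exists_unit_of_valuation_eq (n := 1) hd0 hvd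
  obtain ⟨w, rfl⟩ := Padic.exists_unit_of_valuation_eq (n := 3) he0 hve
  push_cast at *
  rw [pow_one] at *
  refine hde ?_
  have hsq : IsSquare ((u : ℤ_[2]) * w) := by
    apply PadicInt.isSquare_of_toZModPow_three_eq_one
    rw [map_mul]
    refine zmod_eight_mul_eq_one (u.isUnit.map _) (w.isUnit.map _) ?_ ?_ ?_
    · have := exists_zmod_eight_eq_sq_sub (a := -1) hvd
        (by push_cast; rw [← h₁]; exact hrep t₁)
      rwa [map_neg, map_one] at this
    · have := exists_zmod_eight_eq_sq_sub (a := 1 - 2 * w) hvd (by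
        obtain ⟨x, y, hxy⟩ := hrep t₂
        refine ⟨x, y, ?_⟩
        have htwo : ((2 : ℤ_[2]) : ℚ_[2]) = 2 := rfl
        push_cast [htwo]
        linear_combination hxy - h₂)
      rwa [map_sub, map_one, map_mul, map_ofNat] at this
    · have := exists_zmod_eight_eq_sq_sub (a := -(u * w)) hvd (by
        obtain ⟨x, y, hxy⟩ := hrep t₃
        refine ⟨u * y / 2, x / 4, ?_⟩
        push_cast
        linear_combination -((u : ℤ_[2]) : ℚ_[2]) / 8 * (hxy - h₃))
      rwa [map_neg, map_mul] at this
  obtain ⟨r, hr⟩ := hsq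
  refine ⟨4 * r, ?_⟩
  have hr' : ((u : ℤ_[2]) : ℚ_[2]) * (w : ℤ_[2]) = r * r := by exact_mod_cast congrArg _ hr
  linear_combination 16 * hr'
end

section
/- Let K be a finite extension of ℚ₂ whose residue field has 2 elements, and let L/K be a ramified quadratic extension with s = s(L/K). If γ ∈ U_{s,K} but γ ∉ U_{s+1,K}, then γ ∉ N_{L/K}(L*). -/
open Module

/-- `v` is the normalized discrete valuation of the `p`-adic field `K`. -/
def IsNormalizedValuation (p : ℕ) [Fact p.Prime] {K : Type*} [Field K] [Algebra ℚ_[p] K]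
    (v : K → ℤ) : Prop :=
  (∀ x y : K, x ≠ 0 → y ≠ 0 → v (x * y) = v x + v y) ∧
  (∀ x y : K, x ≠ 0 → y ≠ 0 → x + y ≠ 0 → min (v x) (v y) ≤ v (x + y)) ∧
  (∀ n : ℤ, ∃ x : K, x ≠ 0 ∧ v x = n) ∧
  0 < v (algebraMap ℚ_[p] K (p : ℚ_[p]))

/-- The higher unit group `U_{i,F} = {u ∈ F* : v_F(u - 1) ≥ i}` (with `u = 1` allowed). -/
def higherUnits {F : Type*} [Field F] (v : F → ℤ) (i : ℤ) : Set F :=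
  {u : F | u ≠ 0 ∧ (u - 1 = 0 ∨ i ≤ v (u - 1))}

/-- `v` is additive on products of nonzero elements and satisfies the ultrametric inequality. -/
structure IsUltrametricVal {F : Type*} [Field F] (v : F → ℤ) : Prop where
  mul : ∀ x y : F, x ≠ 0 → y ≠ 0 → v (x * y) = v x + v y
  add : ∀ x y : F, x ≠ 0 → y ≠ 0 → x + y ≠ 0 → min (v x) (v y) ≤ v (x + y)

/-- `x` has valuation at least `k`, where `0` has infinite valuation. -/
def ValGe {F : Type*} [Field F] (v : F → ℤ) (x : F) (k : ℤ) : Prop :=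
  x = 0 ∨ k ≤ v x

/-- `x` is nonzero of valuation exactly `k`. -/
def ValEq {F : Type*} [Field F] (v : F → ℤ) (x : F) (k : ℤ) : Prop :=
  x ≠ 0 ∧ v x = k

section Valuation

variable {F : Type*} [Field F] {v : F → ℤ}

theorem ValGe.mono {x : F} {j k : ℤ} (h : ValGe v x k) (hjk : j ≤ k) : ValGe v x j :=
  h.imp id hjk.trans

theorem ValEq.valGe {x : F} {k : ℤ} (h : ValEq v x k) : ValGe v x k :=
  Or.inr h.2.ge

theorem ValEq.not_valGe {x : F} {j k : ℤ} (h : ValEq v x k) (hkj : k < j) : ¬ ValGe v x j := by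
  rintro (h0 | h0)
  · exact h.1 h0
  · have := h.2
    omega

theorem ValEq.unique {x : F} {j k : ℤ} (h : ValEq v x j) (h' : ValEq v x k) : j = k :=
  h.2.symm.trans h'.2

namespace IsUltrametricVal

theorem map_one (hv : IsUltrametricVal v) : v 1 = 0 := by
  have h := hv.mul 1 1 one_ne_zero one_ne_zero
  rw [one_mul] at h
  omega

theorem map_neg (hv : IsUltrametricVal v) (x : F) : v (-x) = v x := by
  have h1 := hv.mul (-1) (-1) (neg_ne_zero.2 one_ne_zero) (neg_ne_zero.2 one_ne_zero)
  rw [neg_one_mul, neg_neg, hv.map_one] at h1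
  by_cases hx : x = 0
  · rw [hx, neg_zero]
  · have h2 := hv.mul (-1) x (neg_ne_zero.2 one_ne_zero) hx
    rw [neg_one_mul] at h2
    omega

theorem valEq_one (hv : IsUltrametricVal v) : ValEq v 1 0 :=
  ⟨one_ne_zero, hv.map_one⟩

theorem valEq_mul (hv : IsUltrametricVal v) {x y : F} {j k : ℤ} (hx : ValEq v x j)
    (hy : ValEq v y k) : ValEq v (x * y) (j + k) :=
  ⟨mul_ne_zero hx.1 hy.1, by rw [hv.mul x y hx.1 hy.1, hx.2, hy.2]⟩

theorem valGe_mul (hv : IsUltrametricVal v) {x y : F} {j k : ℤ} (hx : ValGe v x j)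
    (hy : ValGe v y k) : ValGe v (x * y) (j + k) := by
  by_cases hx0 : x = 0
  · exact Or.inl (by rw [hx0, zero_mul])
  by_cases hy0 : y = 0
  · exact Or.inl (by rw [hy0, mul_zero])
  refine Or.inr ?_
  rw [hv.mul x y hx0 hy0]
  exact add_le_add (hx.resolve_left hx0) (hy.resolve_left hy0)

theorem valGe_add (hv : IsUltrametricVal v) {x y : F} {k : ℤ} (hx : ValGe v x k)
    (hy : ValGe v y k) : ValGe v (x + y) k := by
  by_cases hx0 : x = 0
  · rwa [hx0, zero_add]
  by_cases hy0 : y = 0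
  · rwa [hy0, add_zero]
  by_cases h0 : x + y = 0
  · exact Or.inl h0
  exact Or.inr ((le_min (hx.resolve_left hx0) (hy.resolve_left hy0)).trans
    (hv.add x y hx0 hy0 h0))

theorem valGe_neg (hv : IsUltrametricVal v) {x : F} {k : ℤ} (hx : ValGe v x k) :
    ValGe v (-x) k := by
  rcases hx with hx | hx
  · exact Or.inl (by rw [hx, neg_zero])
  · exact Or.inr (by rwa [hv.map_neg])

theorem valEq_neg (hv : IsUltrametricVal v) {x : F} {k : ℤ} (hx : ValEq v x k) :
    ValEq v (-x) k :=
  ⟨neg_ne_zero.2 hx.1, by rw [hv.map_neg, hx.2]⟩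

theorem valEq_add (hv : IsUltrametricVal v) {x y : F} {k : ℤ} (hx : ValEq v x k)
    (hy : ValGe v y (k + 1)) : ValEq v (x + y) k := by
  have hlt : ¬ ValGe v (x + y) (k + 1) := fun h => by
    refine hx.not_valGe (lt_add_one k) ?_
    simpa using hv.valGe_add h (hv.valGe_neg hy)
  have hge : ValGe v (x + y) k := hv.valGe_add hx.valGe (hy.mono (by omega))
  have h0 : x + y ≠ 0 := fun h => hlt (Or.inl h)
  have h1 : ¬ k + 1 ≤ v (x + y) := fun h => hlt (Or.inr h)
  have h2 := hge.resolve_left h0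
  exact ⟨h0, by omega⟩

theorem valEq_div (hv : IsUltrametricVal v) {x y : F} {j k : ℤ} (hx : ValEq v x j)
    (hy : ValEq v y k) : ValEq v (x / y) (j - k) := by
  have h0 := div_ne_zero hx.1 hy.1
  have h := hv.mul (x / y) y h0 hy.1
  rw [div_mul_cancel₀ x hy.1, hx.2, hy.2] at h
  exact ⟨h0, by omega⟩

/-- With residue field `𝔽₂`, the sum of two elements of equal valuation has larger valuation. -/
theorem valGe_add_succ (hv : IsUltrametricVal v)
    (hres : ∀ u : F, ValEq v u 0 → ValGe v (u - 1) 1) (h2 : ValGe v (2 : F) 1)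
    {x y : F} {k : ℤ} (hx : ValEq v x k) (hy : ValEq v y k) : ValGe v (x + y) (k + 1) := by
  have hu : ValEq v (x / y) 0 := by simpa using hv.valEq_div hx hy
  have h := hv.valGe_mul hy.valGe (hv.valGe_add (hres _ hu) h2)
  have hxy : x + y = y * (x / y - 1 + 2) := by
    have := hy.1
    field_simp
    ring
  rwa [hxy]

/-- If the binary form `a² + abc + b²n`, with `n` a uniformizer and `v c > 0`, takes a value of
valuation `0`, then `a` is a unit and `b` is integral. -/
theorem valEq_zero_of_form (hv : IsUltrametricVal v) {a b c n : F} (hn : ValEq v n 1)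
    (hc : ValGe v c 1) (h : ValEq v (a * a + (a * b * c + b * b * n)) 0) :
    ValEq v a 0 ∧ ValGe v b 0 := by
  by_cases ha : a ≠ 0 ∧ ValGe v b (v a)
  · have hae : ValEq v a (v a) := ⟨ha.1, rfl⟩
    have h1 := hv.valEq_add (hv.valEq_mul hae hae) (hv.valGe_add
      ((hv.valGe_mul (hv.valGe_mul hae.valGe ha.2) hc).mono le_rfl)
      ((hv.valGe_mul (hv.valGe_mul ha.2 ha.2) hn.valGe).mono le_rfl))
    have h2 := h.unique h1
    have h3 : v a = 0 := by omega
    exact ⟨⟨ha.1, h3⟩, h3 ▸ ha.2⟩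
  · exfalso
    have hb : b ≠ 0 := by
      rintro rfl
      refine ha ⟨?_, Or.inl rfl⟩
      rintro rfl
      exact h.1 (by ring)
    have hbe : ValEq v b (v b) := ⟨hb, rfl⟩
    have hage : ValGe v a (v b + 1) := by
      by_contra hcon
      simp only [ValGe, not_or] at hcon
      exact ha ⟨hcon.1, Or.inr (by omega)⟩
    have h1 := hv.valEq_add (hv.valEq_mul (hv.valEq_mul hbe hbe) hn) (hv.valGe_add
      ((hv.valGe_mul hage hage).mono (by omega))
      ((hv.valGe_mul (hv.valGe_mul hage hbe.valGe) hc).mono (by omega)))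
    rw [show b * b * n + (a * a + a * b * c) = a * a + (a * b * c + b * b * n) by ring] at h1
    have := h.unique h1
    omega

/-- Over a residue field `𝔽₂`, the form `a² + abc + b²n` of discriminant invariant
`s = min (2 v(c) - 1, 2 v(2))` does not take any value `γ` with `v(γ - 1) = s`. -/
theorem not_valEq_form_sub_one (hv : IsUltrametricVal v)
    (hres : ∀ u : F, ValEq v u 0 → ValGe v (u - 1) 1) {e s k : ℤ} (he : 0 < e)
    (h2 : ValEq v (2 : F) e) {a b c n : F} (hn : ValEq v n 1) (hk : 0 ≤ k)
    (hc : ValGe v c (k + 1)) (hse : s ≤ 2 * e) (hsk : s = 2 * k ∧ s = 2 * e ∨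
      s = 2 * k + 1 ∧ ValEq v c (k + 1)) :
    ¬ ValEq v (a * a + (a * b * c + b * b * n) - 1) s := by
  intro h
  have hγ : ValEq v (a * a + (a * b * c + b * b * n)) 0 := by
    have h1 := hv.valEq_add hv.valEq_one (h.valGe.mono (j := 0 + 1) (by omega))
    rwa [add_sub_cancel] at h1
  obtain ⟨ha, hb0⟩ := hv.valEq_zero_of_form hn (hc.mono (by omega)) hγ
  obtain ⟨d, rfl⟩ : ∃ d, a = 1 + d := ⟨a - 1, by ring⟩
  have hd1 : ValGe v d 1 := by simpa using hres _ ha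
  have hform : (1 + d) * (1 + d) + ((1 + d) * b * c + b * b * n) - 1
      = d * d + (2 * d + (b * c + (d * (b * c) + b * b * n))) := by ring
  rw [hform] at h
  by_cases hdb : d ≠ 0 ∧ v d ≤ k ∧ ValGe v b (v d)
  · obtain ⟨hd0, hdk, hb⟩ := hdb
    have hd : ValEq v d (v d) := ⟨hd0, rfl⟩
    have hd1' := hd1.resolve_left hd0
    have hrest : ValGe v (b * c + (d * (b * c) + b * b * n)) (v d + v d + 1) :=
      hv.valGe_add ((hv.valGe_mul hb hc).mono (by omega)) (hv.valGe_add
        ((hv.valGe_mul hd1 (hv.valGe_mul hb hc)).mono (by omega))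
        ((hv.valGe_mul (hv.valGe_mul hb hb) hn.valGe).mono (by omega)))
    have hdd := hv.valEq_mul hd hd
    have h2d := hv.valEq_mul h2 hd
    by_cases hed : e = v d
    · rw [← add_assoc] at h
      exact h.not_valGe (by omega) (hv.valGe_add
        (hv.valGe_add_succ hres (h2.valGe.mono he) hdd (by rwa [hed] at h2d)) hrest)
    · have := h.unique (hv.valEq_add hdd (hv.valGe_add (h2d.valGe.mono (by omega)) hrest))
      omega
  by_cases hhigh : ValGe v d (k + 1) ∧ ValGe v b (s - k)
  · obtain ⟨hd, hb⟩ := hhigh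
    exact h.not_valGe (lt_add_one s) <|
      hv.valGe_add ((hv.valGe_mul hd hd).mono (by omega)) <|
      hv.valGe_add ((hv.valGe_mul h2.valGe hd).mono (by omega)) <|
      hv.valGe_add ((hv.valGe_mul hb hc).mono (by omega)) <|
      hv.valGe_add ((hv.valGe_mul hd1 (hv.valGe_mul hb hc)).mono (by omega))
        ((hv.valGe_mul (hv.valGe_mul hb hb) hn.valGe).mono (by omega))
  · obtain ⟨hb', hbk, hd⟩ : b ≠ 0 ∧ v b < s - k ∧ ValGe v d (v b + 1) := by
      simp only [ValGe] at hdb hhigh ⊢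
      have : s - k ≤ k + 1 := by omega
      grind
    have hb : ValEq v b (v b) := ⟨hb', rfl⟩
    rw [show d * d + (2 * d + (b * c + (d * (b * c) + b * b * n)))
      = (b * b * n + b * c) + (d * d + (2 * d + d * (b * c))) by ring] at h
    have hrest : ValGe v (d * d + (2 * d + d * (b * c))) (v b + v b + 1 + 1) :=
      hv.valGe_add ((hv.valGe_mul hd hd).mono (by omega)) (hv.valGe_add
        ((hv.valGe_mul h2.valGe hd).mono (by omega))
        ((hv.valGe_mul hd1 (hv.valGe_mul hb.valGe hc)).mono (by omega)))
    have hbbn := hv.valEq_mul (hv.valEq_mul hb hb) hn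
    by_cases hvb : v b = k
    · have hck : ValEq v c (k + 1) := hsk.elim (fun hs => by omega) And.right
      have hbc : ValEq v (b * c) (v b + v b + 1) := by
        have := hv.valEq_mul hb hck
        rwa [← hvb, ← add_assoc] at this
      exact h.not_valGe (by omega)
        (hv.valGe_add (hv.valGe_add_succ hres (h2.valGe.mono he) hbbn hbc) hrest)
    · have := h.unique (hv.valEq_add (hv.valEq_add hbbn
        ((hv.valGe_mul hb.valGe hc).mono (by omega))) hrest)
      omega

end IsUltrametricVal

end Valuation

theorem IsNormalizedValuation.isUltrametricVal {p : ℕ} [Fact p.Prime] {K : Type*} [Field K]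
    [Algebra ℚ_[p] K] {v : K → ℤ} (hv : IsNormalizedValuation p v) : IsUltrametricVal v :=
  ⟨hv.1, hv.2.1⟩

section Quadratic

variable {K L : Type*} [Field K] [Field L] [Algebra K L]

theorem card_algEquiv_le_two_of_finrank (hL2 : finrank K L = 2) :
    Nat.card (L ≃ₐ[K] L) ≤ 2 := by
  have : FiniteDimensional K L := Module.finite_of_finrank_pos (by omega)
  rw [Nat.card_eq_fintype_card]
  exact hL2 ▸ AlgEquiv.card_le

theorem isGalois_of_finrank_two (hL2 : finrank K L = 2) {σ : L ≃ₐ[K] L} (hσ : σ ≠ 1) :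
    IsGalois K L := by
  have : FiniteDimensional K L := Module.finite_of_finrank_pos (by omega)
  have : Nontrivial (L ≃ₐ[K] L) := ⟨σ, 1, hσ⟩
  have h1 : 1 < Nat.card (L ≃ₐ[K] L) := Finite.one_lt_card
  have h2 := card_algEquiv_le_two_of_finrank hL2
  exact IsGalois.of_card_aut_eq_finrank K L (by omega)

theorem algEquiv_eq_one_or_eq (hL2 : finrank K L = 2) {σ : L ≃ₐ[K] L} (hσ : σ ≠ 1)
    (τ : L ≃ₐ[K] L) : τ = 1 ∨ τ = σ := by
  classical
  have : FiniteDimensional K L := Module.finite_of_finrank_pos (by omega)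
  by_contra! h
  have h3 : ({1, σ, τ} : Finset (L ≃ₐ[K] L)).card = 3 :=
    Finset.card_eq_three.2 ⟨1, σ, τ, hσ.symm, h.1.symm, h.2.symm, rfl⟩
  have h2 := card_algEquiv_le_two_of_finrank hL2
  rw [Nat.card_eq_fintype_card] at h2
  have := Finset.card_le_univ ({1, σ, τ} : Finset (L ≃ₐ[K] L))
  omega

theorem algEquiv_apply_apply (hL2 : finrank K L = 2) {σ : L ≃ₐ[K] L} (hσ : σ ≠ 1) (x : L) :
    σ (σ x) = x := by
  rcases algEquiv_eq_one_or_eq hL2 hσ (σ * σ) with h | h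
  · exact DFunLike.congr_fun h x
  · exact absurd (mul_eq_left.1 h) hσ

theorem exists_algebraMap_eq_of_fixed (hL2 : finrank K L = 2) {σ : L ≃ₐ[K] L} (hσ : σ ≠ 1)
    {x : L} (hx : σ x = x) : ∃ a : K, algebraMap K L a = x := by
  have : FiniteDimensional K L := Module.finite_of_finrank_pos (by omega)
  have := isGalois_of_finrank_two hL2 hσ
  refine (IsGalois.mem_range_algebraMap_iff_fixed x).2 fun τ => ?_
  rcases algEquiv_eq_one_or_eq hL2 hσ τ with rfl | rfl
  · rfl
  · exact hx

theorem algebraMap_norm_eq_mul (hL2 : finrank K L = 2) {σ : L ≃ₐ[K] L} (hσ : σ ≠ 1) (x : L) :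
    algebraMap K L (Algebra.norm K x) = x * σ x := by
  classical
  have : FiniteDimensional K L := Module.finite_of_finrank_pos (by omega)
  have := isGalois_of_finrank_two hL2 hσ
  have huniv : (Finset.univ : Finset (L ≃ₐ[K] L)) = {1, σ} := by
    ext τ
    simpa using algEquiv_eq_one_or_eq hL2 hσ τ
  rw [Algebra.norm_eq_prod_automorphisms, huniv, Finset.prod_pair hσ.symm]
  rfl

/-- If `π` is moved by `σ`, then `1, π` span the quadratic extension. -/
theorem exists_eq_add_mul (hL2 : finrank K L = 2) {σ : L ≃ₐ[K] L} (hσ : σ ≠ 1) {π : L}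
    (hπ : σ π ≠ π) (t : L) : ∃ a b : K, t = algebraMap K L a + algebraMap K L b * π := by
  have h1 : σ π - π ≠ 0 := sub_ne_zero.2 hπ
  have h2 : π - σ π ≠ 0 := sub_ne_zero.2 hπ.symm
  have hσσ := algEquiv_apply_apply hL2 hσ
  obtain ⟨b, hb⟩ := exists_algebraMap_eq_of_fixed hL2 hσ (x := (σ t - t) / (σ π - π)) (by
    simp only [map_div₀, map_sub, hσσ]
    rw [div_eq_div_iff h2 h1]
    ring)
  obtain ⟨a, ha⟩ := exists_algebraMap_eq_of_fixed hL2 hσ (x := t - algebraMap K L b * π) (by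
    rw [map_sub, map_mul, σ.commutes, hb]
    field_simp
    ring)
  exact ⟨a, b, by rw [ha]; ring⟩

end Quadratic

/-- Corollary 5.4(iii): let `K` be a finite extension of `ℚ₂` with residue field `𝔽₂`,
`L/K` a ramified quadratic extension with invariant `s = s(L/K)`. If `γ ∈ U_{s,K}` but
`γ ∉ U_{s+1,K}`, then `γ ∉ N_{L/K}(L*)`. -/
theorem stmt_13
    (K : Type*) [Field K] [Algebra ℚ_[2] K] [FiniteDimensional ℚ_[2] K]
    (vK : K → ℤ) (hvK : IsNormalizedValuation 2 vK)
    (hres : ∀ u : K, u ≠ 0 → vK u = 0 → (u - 1 = 0 ∨ 1 ≤ vK (u - 1)))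
    (L : Type*) [Field L] [Algebra K L] [Algebra ℚ_[2] L] [IsScalarTower ℚ_[2] K L]
    (hL2 : finrank K L = 2)
    (vL : L → ℤ) (hvL : IsNormalizedValuation 2 vL)
    (hram : ∀ x : K, x ≠ 0 → vL (algebraMap K L x) = 2 * vK x)
    (σ : L ≃ₐ[K] L) (hσ : σ ≠ 1)
    (πL : L) (hπL0 : πL ≠ 0) (hπL : vL πL = 1)
    (s : ℤ) (hs0 : σ πL / πL - 1 ≠ 0) (hs : vL (σ πL / πL - 1) = s)
    (γ : K) (hγ : γ ∈ higherUnits vK s) (hγ' : γ ∉ higherUnits vK (s + 1)) :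
    γ ∉ normGroup K L := by
  have hK := hvK.isUltrametricVal
  have hL := hvL.isUltrametricVal
  have hram' : ∀ {x : K} {k : ℤ}, ValEq vK x k → ValEq vL (algebraMap K L x) (2 * k) :=
    fun hx => ⟨by simpa using hx.1, by rw [hram _ hx.1, hx.2]⟩
  have hπ : ValEq vL πL 1 := ⟨hπL0, hπL⟩
  have hσσ := algEquiv_apply_apply hL2 hσ
  have hdiff : ValEq vL (σ πL - πL) (s + 1) := by
    have := hL.valEq_mul ⟨hs0, hs⟩ hπ
    rwa [sub_mul, div_mul_cancel₀ _ hπL0, one_mul] at this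
  obtain ⟨c, hc⟩ := exists_algebraMap_eq_of_fixed hL2 hσ (x := πL + σ πL) (by
    rw [map_add, hσσ, add_comm])
  obtain ⟨n, hn⟩ := exists_algebraMap_eq_of_fixed hL2 hσ (x := πL * σ πL) (by
    rw [map_mul, hσσ, mul_comm])
  have hσπ0 : σ πL ≠ 0 := by simpa using hπL0
  have hn0 : n ≠ 0 := by
    rintro rfl
    exact mul_ne_zero hπL0 hσπ0 (by rw [← hn, map_zero])
  have hn2 : vL (σ πL) = 2 * vK n - 1 := by
    have := hL.mul _ _ hπL0 hσπ0
    rw [← hn, hram n hn0] at this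
    omega
  have hσπ : σ πL = algebraMap K L c + -πL := by rw [hc]; ring
  have hσπc : σ πL - πL = algebraMap K L c + -(algebraMap K L 2 * πL) := by
    rw [hc, map_ofNat]; ring
  -- The trace of the uniformizer is not a unit, since `v(σ π)` is odd.
  have hc1 : ValGe vK c 1 := by
    by_contra hcon
    simp only [ValGe, not_or] at hcon
    have := hL.valEq_add (hram' ⟨hcon.1, rfl⟩)
      ((hL.valEq_neg hπ).valGe.mono (j := 2 * vK c + 1) (by omega))
    rw [← hσπ] at this
    have := this.2
    omega
  have hn1 : ValEq vK n 1 := by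
    have : ValEq vL (-πL + algebraMap K L c) 1 := by
      refine hL.valEq_add (hL.valEq_neg hπ) ?_
      by_cases hc0 : c = 0
      · exact Or.inl (by rw [hc0, map_zero])
      · have := hc1.resolve_left hc0
        exact Or.inr (by rw [hram c hc0]; omega)
    rw [add_comm, ← hσπ] at this
    have := this.2
    exact ⟨hn0, by omega⟩
  have he : 0 < vK 2 := by
    have h := hvK.2.2.2
    rwa [map_natCast, Nat.cast_ofNat] at h
  have h2 : ValEq vK 2 (vK 2) := by
    have : CharZero K := charZero_of_injective_algebraMap (algebraMap ℚ_[2] K).injective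
    exact ⟨two_ne_zero, rfl⟩
  have h2π : ValEq vL (-(algebraMap K L 2 * πL)) (2 * vK 2 + 1) :=
    hL.valEq_neg (hL.valEq_mul (hram' h2) hπ)
  obtain ⟨k, hk0, hck, hse, hsk⟩ : ∃ k : ℤ, 0 ≤ k ∧ ValGe vK c (k + 1) ∧ s ≤ 2 * vK 2 ∧
      (s = 2 * k ∧ s = 2 * vK 2 ∨ s = 2 * k + 1 ∧ ValEq vK c (k + 1)) := by
    rw [hσπc] at hdiff
    by_cases hlow : ValGe vK c (vK 2 + 1)
    · have hcL : ValGe vL (algebraMap K L c) (2 * vK 2 + 1 + 1) := by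
        by_cases hc0 : c = 0
        · exact Or.inl (by rw [hc0, map_zero])
        · have := hlow.resolve_left hc0
          exact Or.inr (by rw [hram c hc0]; omega)
      have h := hL.valEq_add h2π hcL
      rw [add_comm] at h
      have := hdiff.unique h
      exact ⟨vK 2, he.le, hlow, by omega, Or.inl ⟨by omega, by omega⟩⟩
    · simp only [ValGe, not_or] at hlow
      have hc0 := hlow.1
      have hc1' := hc1.resolve_left hc0
      have := hdiff.unique (hL.valEq_add (hram' ⟨hc0, rfl⟩) (h2π.valGe.mono (by omega)))
      exact ⟨vK c - 1, by omega, Or.inr (by omega), by omega,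
        Or.inr ⟨by omega, hc0, by omega⟩⟩
  have hγs : ValEq vK (γ - 1) s := by
    have hlt : ¬ ValGe vK (γ - 1) (s + 1) := fun h => hγ' ⟨hγ.1, h⟩
    simp only [ValGe, not_or] at hlt
    have := hγ.2.resolve_left hlt.1
    exact ⟨hlt.1, by omega⟩
  rintro ⟨t, -, rfl⟩
  obtain ⟨a, b, rfl⟩ := exists_eq_add_mul hL2 hσ (sub_ne_zero.1 hdiff.1) t
  have hnorm : Algebra.norm K (algebraMap K L a + algebraMap K L b * πL)
      = a * a + (a * b * c + b * b * n) := by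
    apply (algebraMap K L).injective
    rw [algebraMap_norm_eq_mul hL2 hσ]
    simp only [map_add, map_mul, AlgEquiv.commutes, hc, hn]
    ring
  rw [hnorm] at hγs
  exact hK.not_valEq_form_sub_one (fun u hu => hres u hu.1 hu.2) he h2 hn1 hk0 hck hse hsk hγs
end

section
/- Let L be the unramified quadratic extension of ℚ₂ and let e ∈ ℚ₂* be a non-square with v₂(e) ≡ 0 (mod 4). Then −e ∈ N_{L/ℚ₂}(L*), and every x ∈ ℚ₂* with x(x² − e) ∈ N_{L/ℚ₂}(L*) satisfies x ∈ N_{L/ℚ₂}(L*) and x² − e ∈ N_{L/ℚ₂}(L*). -/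
open Module

namespace PadicInt

/-- An Artin–Schreier equation over `ℤ_[2]` with topologically nilpotent constant term is
solvable. -/
lemma exists_sq_add_self_eq {c : ℤ_[2]} (hc : ‖c‖ < 1) : ∃ z : ℤ_[2], z ^ 2 + z = c := by
  obtain ⟨z, hz, -⟩ := hensels_lemma (p := 2) (R := ℤ_[2])
    (F := Polynomial.X ^ 2 + Polynomial.X - Polynomial.C c) (a := 0) (by simpa using hc)
  exact ⟨z, by simpa [sub_eq_zero] using hz⟩

lemma norm_two_lt_one : ‖(2 : ℤ_[2])‖ < 1 := by
  simpa using (norm_lt_one_iff_dvd (p := 2) 2).mpr (by simp)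

lemma norm_lt_one_or_norm_add_one_lt_one (r : ℤ_[2]) : ‖r‖ < 1 ∨ ‖r + 1‖ < 1 := by
  obtain ⟨n, hn, hr⟩ := exists_mem_range r
  rw [IsLocalRing.mem_maximalIdeal, mem_nonunits] at hr
  interval_cases n
  · left
    simpa using hr
  · right
    have h := norm_lt_one_add hr norm_two_lt_one
    convert h using 2
    push_cast
    ring

lemma norm_sq_add_self_lt_one (r : ℤ_[2]) : ‖r ^ 2 + r‖ < 1 := by
  rcases norm_lt_one_or_norm_add_one_lt_one r with h | h
  · rw [show r ^ 2 + r = (r + 1) * r by ring]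
    exact norm_lt_one_mul h
  · rw [show r ^ 2 + r = r * (r + 1) by ring]
    exact norm_lt_one_mul h

lemma norm_add_lt_one_of_norm_eq_one {x y : ℤ_[2]} (hx : ‖x‖ = 1) (hy : ‖y‖ = 1) :
    ‖x + y‖ < 1 := by
  have hx' := (norm_lt_one_or_norm_add_one_lt_one x).resolve_left hx.not_lt
  have hy' := (norm_lt_one_or_norm_add_one_lt_one y).resolve_left hy.not_lt
  have h := norm_lt_one_add (norm_lt_one_add hx' hy')
    (norm_lt_one_mul (z1 := -1) norm_two_lt_one)
  convert h using 2
  ring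

end PadicInt

namespace Padic

lemma valuation_eq_of_norm_eq {p : ℕ} [Fact p.Prime] {x y : ℚ_[p]} (hx : x ≠ 0)
    (h : ‖x‖ = ‖y‖) : x.valuation = y.valuation := by
  have hy : y ≠ 0 := norm_ne_zero_iff.mp (h ▸ norm_ne_zero_iff.mpr hx)
  rw [norm_eq_zpow_neg_valuation hx, norm_eq_zpow_neg_valuation hy] at h
  have hp : (1 : ℝ) < p := by exact_mod_cast (Fact.out : p.Prime).one_lt
  have := zpow_right_injective₀ (by linarith) hp.ne' h
  omega

lemma norm_eq_one_of_valuation_eq_zero {p : ℕ} [Fact p.Prime] {x : ℚ_[p]} (hx : x ≠ 0)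
    (h : x.valuation = 0) : ‖x‖ = 1 := by
  simp [norm_eq_zpow_neg_valuation hx, h]

lemma valuation_two : (2 : ℚ_[2]).valuation = 1 := by
  simp

/-- The nonzero values of the form `a² + ab - mb²` over `ℚ₂`, with `m` a unit, have even
valuation. -/
lemma even_valuation_sq_add_mul_sub {m : ℤ_[2]} (hm : ‖m‖ = 1) (a b : ℚ_[2]) :
    Even (a ^ 2 + a * b - m * b ^ 2).valuation := by
  rcases eq_or_ne b 0 with rfl | hb
  · simp
  obtain ⟨r, rfl⟩ : ∃ r, a = r * b := ⟨a / b, by field_simp⟩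
  have hm' : ‖-(m : ℚ_[2])‖ = 1 := by simpa using hm
  have hr : Even (r ^ 2 + r - m).valuation ∧ r ^ 2 + r - m ≠ 0 := by
    rcases le_or_gt ‖r‖ 1 with h | h
    · have hlt : ‖r ^ 2 + r‖ < 1 := PadicInt.norm_sq_add_self_lt_one ⟨r, h⟩
      have h1 : ‖r ^ 2 + r - m‖ = ‖(1 : ℚ_[2])‖ := by
        rw [sub_eq_add_neg, add_eq_max_of_ne (by rw [hm']; exact hlt.ne), hm',
          max_eq_right hlt.le, norm_one]
      have h0 : r ^ 2 + r - m ≠ 0 := norm_ne_zero_iff.mp (by simp [h1])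
      exact ⟨by simp [valuation_eq_of_norm_eq h0 h1], h0⟩
    · have hlt : ‖r - m‖ < ‖r ^ 2‖ := by
        rw [sub_eq_add_neg, add_eq_max_of_ne (by rw [hm']; exact h.ne'), hm',
          max_eq_left h.le, norm_pow]
        nlinarith
      have h1 : ‖r ^ 2 + r - m‖ = ‖r ^ 2‖ := by
        rw [add_sub_assoc, add_eq_max_of_ne hlt.ne', max_eq_left hlt.le]
      have h0 : r ^ 2 + r - m ≠ 0 := norm_ne_zero_iff.mp (h1 ▸ ((norm_nonneg _).trans_lt hlt).ne')
      exact ⟨by simp [valuation_eq_of_norm_eq h0 h1], h0⟩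
  rw [show (r * b) ^ 2 + r * b * b - m * b ^ 2 = b ^ 2 * (r ^ 2 + r - m) by ring,
    valuation_mul (pow_ne_zero 2 hb) hr.2, valuation_pow]
  exact (even_two.mul_right _).add hr.1

/-- Every nonzero element of `ℚ₂` of even valuation is a value of `a² + ab - mb²`, for `m` a
unit. -/
lemma exists_sq_add_mul_sub_eq {m : ℤ_[2]} (hm : ‖m‖ = 1) {x : ℚ_[2]} (hx : x ≠ 0)
    (h : Even x.valuation) : ∃ a b : ℚ_[2], a ^ 2 + a * b - m * b ^ 2 = x := by
  obtain ⟨k, hk⟩ := h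
  have h2 : (2 : ℚ_[2]) ^ k ≠ 0 := zpow_ne_zero _ two_ne_zero
  obtain ⟨u, rfl⟩ : ∃ u, x = (2 ^ k) ^ 2 * u := ⟨x / (2 ^ k) ^ 2, by field_simp⟩
  have hu0 : u ≠ 0 := right_ne_zero_of_mul hx
  have hu : ‖u‖ = 1 := by
    refine norm_eq_one_of_valuation_eq_zero hu0 ?_
    rw [valuation_mul (pow_ne_zero 2 h2) hu0, valuation_pow, valuation_zpow, valuation_two] at hk
    push_cast at hk
    omega
  obtain ⟨z, hz⟩ := PadicInt.exists_sq_add_self_eq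
    (PadicInt.norm_add_lt_one_of_norm_eq_one hm (y := ⟨u, hu.le⟩) hu)
  have hz' : (z : ℚ_[2]) ^ 2 + z = m + u := congrArg Subtype.val hz
  exact ⟨2 ^ k * z, 2 ^ k, by linear_combination (2 ^ k) ^ 2 * hz'⟩

end Padic

section Quadratic

variable {K L : Type*} [Field K] [Field L] [Algebra K L]

/-- A quadratic extension has the basis `1, t` for any `t` outside the base field. -/
lemma exists_basis_one_of_finrank_eq_two (hL : finrank K L = 2) {t : L}
    (ht : ∀ a : K, algebraMap K L a ≠ t) : ∃ b : Basis (Fin 2) K L, b 0 = 1 ∧ b 1 = t := by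
  have hli : LinearIndependent K ![1, t] :=
    (LinearIndependent.pair_iff' one_ne_zero).mpr
      (by simpa [Algebra.algebraMap_eq_smul_one] using ht)
  refine ⟨basisOfLinearIndependentOfCardEqFinrank hli (by simp [hL]), ?_, ?_⟩ <;> simp

lemma exists_algebraMap_add_mul_eq (hL : finrank K L = 2) {t : L}
    (ht : ∀ a : K, algebraMap K L a ≠ t) (x : L) :
    ∃ a c : K, algebraMap K L a + algebraMap K L c * t = x := by
  obtain ⟨b, h0, h1⟩ := exists_basis_one_of_finrank_eq_two hL ht
  refine ⟨b.repr x 0, b.repr x 1, ?_⟩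
  have h := b.sum_repr x
  rwa [Fin.sum_univ_two, h0, h1, Algebra.smul_def, Algebra.smul_def, mul_one] at h

lemma norm_algebraMap_add_mul (hL : finrank K L = 2) {t : L}
    (ht : ∀ a : K, algebraMap K L a ≠ t) {m : K} (htm : t ^ 2 = t + algebraMap K L m) (a c : K) :
    Algebra.norm K (algebraMap K L a + algebraMap K L c * t) = a ^ 2 + a * c - m * c ^ 2 := by
  obtain ⟨b, h0, h1⟩ := exists_basis_one_of_finrank_eq_two hL ht
  have e0 : (algebraMap K L a + algebraMap K L c * t) * b 0 = a • b 0 + c • b 1 := by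
    rw [h0, h1, Algebra.smul_def, Algebra.smul_def]
    ring
  have e1 : (algebraMap K L a + algebraMap K L c * t) * b 1 = (c * m) • b 0 + (a + c) • b 1 := by
    rw [h0, h1, Algebra.smul_def, Algebra.smul_def, map_mul, map_add]
    linear_combination algebraMap K L c * htm
  rw [Algebra.norm_eq_matrix_det b, Matrix.det_fin_two]
  simp only [Algebra.leftMulMatrix_eq_repr_mul, e0, e1]
  simp
  ring

/-- A quadratic extension in characteristic not two is generated by a square root. -/
lemma exists_sq_eq_algebraMap (h2 : (2 : K) ≠ 0) (hL : finrank K L = 2) :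
    ∃ (s : L) (d : K), s ^ 2 = algebraMap K L d ∧ ∀ a : K, algebraMap K L a ≠ s := by
  obtain ⟨α, hα⟩ : ∃ α : L, ∀ a : K, algebraMap K L a ≠ α := by
    by_contra! h
    have h1 : finrank K L = 1 := by
      rw [← Subalgebra.bot_eq_top_iff_finrank_eq_one, eq_top_iff]
      exact fun x _ => Algebra.mem_bot.mpr (h x)
    omega
  obtain ⟨p, q, hpq⟩ := exists_algebraMap_add_mul_eq hL hα (α ^ 2)
  refine ⟨2 * α - algebraMap K L q, 4 * p + q ^ 2, ?_, fun a ha => hα ((a + q) / 2) ?_⟩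
  · simp only [map_add, map_mul, map_pow, map_ofNat]
    linear_combination -4 * hpq
  · have h2' : (2 : L) ≠ 0 := by
      rwa [← map_ofNat (algebraMap K L) 2, map_ne_zero]
    rw [map_div₀, map_add, ha, map_ofNat]
    field_simp
    ring

end Quadratic

/-- The unramified quadratic extension of `ℚ₂` is generated by a root of `X² - X - m` with `m`
a `2`-adic unit. -/
lemma exists_artinSchreier_generator {L : Type*} [Field L] [Algebra ℚ_[2] L]
    (hL2 : finrank ℚ_[2] L = 2) {vL : L → ℤ} (hvL : IsNormalizedValuation 2 vL)
    (hunram : ∀ x : ℚ_[2], x ≠ 0 → vL (algebraMap ℚ_[2] L x) = x.valuation) :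
    ∃ (t : L) (m : ℤ_[2]), ‖m‖ = 1 ∧ t ^ 2 = t + algebraMap ℚ_[2] L m ∧
      ∀ a : ℚ_[2], algebraMap ℚ_[2] L a ≠ t := by
  obtain ⟨hmul, hadd, -, -⟩ := hvL
  have h2L : (2 : L) ≠ 0 := by
    rw [← map_ofNat (algebraMap ℚ_[2] L) 2, map_ne_zero]
    exact two_ne_zero
  have hv2 : vL 2 = 1 := by
    rw [← map_ofNat (algebraMap ℚ_[2] L) 2, hunram 2 two_ne_zero, Padic.valuation_two]
  obtain ⟨s, d, hsd, hs, hd0, hd⟩ : ∃ (s : L) (d : ℚ_[2]), s ^ 2 = algebraMap ℚ_[2] L d ∧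
      (∀ a : ℚ_[2], algebraMap ℚ_[2] L a ≠ s) ∧ d ≠ 0 ∧ d.valuation = 0 := by
    obtain ⟨s, d, hsd, hs⟩ := exists_sq_eq_algebraMap (L := L) (two_ne_zero (α := ℚ_[2])) hL2
    have hs0 : s ≠ 0 := fun h => hs 0 (by simp [h])
    have hd0 : d ≠ 0 := by
      rintro rfl
      exact hs0 (by simpa using hsd)
    have hval := hunram d hd0
    rw [← hsd, sq, hmul s s hs0 hs0] at hval
    have h2k : (2 : ℚ_[2]) ^ (-vL s) ≠ 0 := zpow_ne_zero _ two_ne_zero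
    refine ⟨algebraMap ℚ_[2] L (2 ^ (-vL s)) * s, (2 ^ (-vL s)) ^ 2 * d, ?_, fun a ha => ?_,
      mul_ne_zero (pow_ne_zero 2 h2k) hd0, ?_⟩
    · rw [mul_pow, hsd, map_mul, map_pow]
    · refine hs (a / 2 ^ (-vL s)) ?_
      rw [map_div₀, ha, mul_div_cancel_left₀ _ ((map_ne_zero _).mpr h2k)]
    · rw [Padic.valuation_mul (pow_ne_zero 2 h2k) hd0, Padic.valuation_pow, Padic.valuation_zpow,
        Padic.valuation_two]
      push_cast
      omega
  have hp : 1 + s ≠ 0 := fun h => hs (-1) (by simp; linear_combination -h)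
  have hn : 1 - s ≠ 0 := fun h => hs 1 (by simp; linear_combination h)
  have hprod : (1 + s) * (1 - s) = algebraMap ℚ_[2] L (1 - d) := by
    rw [map_sub, map_one, ← hsd]
    ring
  have hd1 : 1 - d ≠ 0 := by
    intro h
    rw [h, map_zero] at hprod
    exact mul_ne_zero hp hn hprod
  have hdn : ‖d‖ = 1 := Padic.norm_eq_one_of_valuation_eq_zero hd0 hd
  have hge : 2 ≤ (1 - d).valuation := by
    have hlt : ‖1 - d‖ < 1 := by
      have h : ‖(1 : ℚ_[2]) + -d‖ < 1 := PadicInt.norm_add_lt_one_of_norm_eq_one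
        (x := 1) (y := ⟨-d, by simp [hdn]⟩) (by simp) (by simpa using hdn)
      rwa [← sub_eq_add_neg] at h
    have hnn : 0 ≤ (1 - d).valuation := (Padic.norm_le_one_iff_val_nonneg _).mp hlt.le
    have hne : (1 - d).valuation ≠ 0 := fun h =>
      hlt.ne (Padic.norm_eq_one_of_valuation_eq_zero hd1 h)
    have hval := hunram (1 - d) hd1
    rw [← hprod, hmul _ _ hp hn] at hval
    have hneg : ∀ x : L, x ≠ 0 → vL (-x) = vL x := by
      intro x hx
      have h1 := hunram (-1) (by simp)
      rw [map_neg, map_one] at h1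
      have h2 : (-1 : ℚ_[2]).valuation = 0 := by
        simpa using Padic.valuation_eq_of_norm_eq (x := (-1 : ℚ_[2])) (y := 1) (by simp) (by simp)
      rw [← neg_one_mul, hmul _ _ (by simp) hx, h1, h2, zero_add]
    have hA := hadd 2 (-(1 - s)) h2L (neg_ne_zero.mpr hn) (by convert hp using 1; ring)
    have hB := hadd 2 (-(1 + s)) h2L (neg_ne_zero.mpr hp) (by convert hn using 1; ring)
    rw [hneg _ hn, hv2, show (2 : L) + -(1 - s) = 1 + s by ring] at hA
    rw [hneg _ hp, hv2, show (2 : L) + -(1 + s) = 1 - s by ring] at hB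
    omega
  have hm : ‖(d - 1) / 4‖ ≤ 1 := by
    have h4 : (4 : ℚ_[2])⁻¹.valuation = -2 := by
      rw [show (4 : ℚ_[2]) = 2 ^ 2 by norm_num, Padic.valuation_inv, Padic.valuation_pow,
        Padic.valuation_two]
      norm_num
    rw [← norm_neg, ← neg_div, neg_sub, Padic.norm_le_one_iff_val_nonneg, div_eq_mul_inv,
      Padic.valuation_mul hd1 (by norm_num), h4]
    omega
  have ht : ∀ a : ℚ_[2], algebraMap ℚ_[2] L a ≠ (1 + s) / 2 := by
    intro a ha
    refine hs (2 * a - 1) ?_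
    rw [map_sub, map_mul, ha, map_one, map_ofNat]
    field_simp
    ring
  have htm : ((1 + s) / 2) ^ 2 = (1 + s) / 2 + algebraMap ℚ_[2] L ((d - 1) / 4) := by
    have h4L : (4 : L) ≠ 0 := by
      rw [show (4 : L) = 2 * 2 by norm_num]
      exact mul_ne_zero h2L h2L
    rw [map_div₀, map_sub, map_one, map_ofNat, ← hsd]
    field_simp
    ring
  refine ⟨(1 + s) / 2, ⟨(d - 1) / 4, hm⟩, ?_, htm, ht⟩
  by_contra hne
  obtain ⟨z, hz⟩ := PadicInt.exists_sq_add_self_eq (lt_of_le_of_ne (PadicInt.norm_le_one _) hne)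
  have hz' : (z : ℚ_[2]) ^ 2 + z = (d - 1) / 4 := congrArg Subtype.val hz
  rw [← hz', map_add, map_pow] at htm
  have hroot : ((1 + s) / 2 + algebraMap ℚ_[2] L z) *
      ((1 + s) / 2 - (algebraMap ℚ_[2] L z + 1)) = 0 := by
    linear_combination htm
  rcases mul_eq_zero.mp hroot with h | h
  · exact ht (-z) (by rw [map_neg]; linear_combination -h)
  · exact ht (z + 1) (by rw [map_add, map_one]; linear_combination -h)

/-- The norms from the unramified quadratic extension of `ℚ₂` are the nonzero elements of even
valuation. -/
lemma mem_normGroup_iff_even_valuation {L : Type*} [Field L] [Algebra ℚ_[2] L]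
    (hL2 : finrank ℚ_[2] L = 2) {vL : L → ℤ} (hvL : IsNormalizedValuation 2 vL)
    (hunram : ∀ x : ℚ_[2], x ≠ 0 → vL (algebraMap ℚ_[2] L x) = x.valuation)
    {x : ℚ_[2]} (hx : x ≠ 0) : x ∈ normGroup ℚ_[2] L ↔ Even x.valuation := by
  obtain ⟨t, m, hm, htm, ht⟩ := exists_artinSchreier_generator hL2 hvL hunram
  constructor
  · rintro ⟨y, -, rfl⟩
    obtain ⟨a, c, rfl⟩ := exists_algebraMap_add_mul_eq hL2 ht y
    rw [norm_algebraMap_add_mul hL2 ht htm]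
    exact Padic.even_valuation_sq_add_mul_sub hm a c
  · intro h
    obtain ⟨a, c, hac⟩ := Padic.exists_sq_add_mul_sub_eq hm hx h
    have hnorm := (norm_algebraMap_add_mul hL2 ht htm a c).trans hac
    refine ⟨_, fun h0 => hx ?_, hnorm⟩
    have : FiniteDimensional ℚ_[2] L := FiniteDimensional.of_finrank_pos (by omega)
    rw [← hnorm, h0, Algebra.norm_zero]

/-- Theorem 1.3(1)(i), number-theoretic content: let `L` be the unramified quadratic
extension of `ℚ₂` and `e ∈ ℚ₂*` a non-square with `v₂(e) ≡ 0 (mod 4)`. Then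
`-e ∈ N_{L/ℚ₂}(L*)`, and every `x ∈ ℚ₂*` with `x(x² - e) ∈ N_{L/ℚ₂}(L*)` satisfies
`x ∈ N_{L/ℚ₂}(L*)` and `x² - e ∈ N_{L/ℚ₂}(L*)`. -/
theorem stmt_14
    (L : Type*) [Field L] [Algebra ℚ_[2] L] (hL2 : finrank ℚ_[2] L = 2)
    (vL : L → ℤ) (hvL : IsNormalizedValuation 2 vL)
    (hunram : ∀ x : ℚ_[2], x ≠ 0 → vL (algebraMap ℚ_[2] L x) = x.valuation)
    (e : ℚ_[2]) (he0 : e ≠ 0) (he : ¬ IsSquare e) (hve : (4 : ℤ) ∣ e.valuation) :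
    -e ∈ normGroup ℚ_[2] L ∧
    ∀ x : ℚ_[2], x ≠ 0 → x * (x ^ 2 - e) ∈ normGroup ℚ_[2] L →
      x ∈ normGroup ℚ_[2] L ∧ x ^ 2 - e ∈ normGroup ℚ_[2] L := by
  have hnorm {x : ℚ_[2]} (hx : x ≠ 0) := mem_normGroup_iff_even_valuation hL2 hvL hunram hx
  have hvneg : (-e).valuation = e.valuation :=
    Padic.valuation_eq_of_norm_eq (neg_ne_zero.mpr he0) (norm_neg e)
  refine ⟨(hnorm (neg_ne_zero.mpr he0)).mpr ?_, fun x hx hmem => ?_⟩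
  · rw [hvneg, even_iff_two_dvd]
    omega
  have hxe : x ^ 2 - e ≠ 0 := fun h => he ⟨x, by linear_combination -h⟩
  rw [hnorm (mul_ne_zero hx hxe), Padic.valuation_mul hx hxe] at hmem
  rw [hnorm hx, hnorm hxe]
  suffices h : Even x.valuation from ⟨h, (Int.even_add.mp hmem).mp h⟩
  by_contra hodd
  have hx2 : (x ^ 2).valuation = 2 * x.valuation := by simp
  have hne : ‖x ^ 2‖ ≠ ‖-e‖ := by
    intro h
    have := Padic.valuation_eq_of_norm_eq (pow_ne_zero 2 hx) h
    rw [Int.even_iff] at hodd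
    omega
  refine hodd ((Int.even_add.mp hmem).mpr ?_)
  have hmax := Padic.add_eq_max_of_ne hne
  rw [← sub_eq_add_neg] at hmax
  rw [even_iff_two_dvd]
  rcases max_choice ‖x ^ 2‖ ‖-e‖ with h | h
  all_goals
    have := Padic.valuation_eq_of_norm_eq hxe (hmax.trans h)
    omega
end

section
/- Let L/ℚ₂ be a ramified quadratic extension and let e ∈ ℚ₂* be a non-square such that ℚ₂(√e) is not ℚ₂-isomorphic to L. If −1 ∉ N_{L/ℚ₂}(L*) or e ∉ N_{L/ℚ₂}(L*), then either −e ∉ N_{L/ℚ₂}(L*), or there exists x ∈ ℚ₂* with x ∉ N_{L/ℚ₂}(L*) and x² − e ∉ N_{L/ℚ₂}(L*). -/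
open Module

namespace PadicInt

/-- A `2`-adic integer congruent to `1` modulo `8` is a square. -/
theorem isSquare_of_toZModPow_three_eq_one_s17 {u : ℤ_[2]} (hu : toZModPow 3 u = 1) :
    IsSquare u := by
  have hmem : u - 1 ∈ Ideal.span {((2 : ℕ) : ℤ_[2]) ^ 3} := by
    rw [← ker_toZModPow, RingHom.mem_ker, map_sub, hu, map_one, sub_self]
  have hle : ‖u - 1‖ ≤ 1 / 8 := by
    have := (norm_le_pow_iff_mem_span_pow _ _).2 hmem
    norm_num at this ⊢
    exact this
  have h2 : ‖(2 : ℤ_[2])‖ = 1 / 2 := by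
    have := norm_p (p := 2)
    norm_num at this ⊢
    exact this
  obtain ⟨z, hz, -⟩ := hensels_lemma (p := 2) (R := ℤ_[2])
    (F := (Polynomial.X ^ 2 - Polynomial.C u : Polynomial ℤ_[2])) (a := 1) (by
      have h1 : ‖1 - u‖ ≤ 1 / 8 := by rwa [norm_sub_rev]
      simp only [map_sub, map_pow, Polynomial.aeval_X, Polynomial.aeval_C,
        Polynomial.derivative_X_pow, Polynomial.derivative_C, map_mul, sub_zero, one_pow,
        Algebra.algebraMap_self, RingHom.id_apply, Nat.cast_ofNat, mul_one, h2]
      linarith)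
  refine ⟨z, ?_⟩
  simp only [map_sub, map_pow, Polynomial.aeval_X, Polynomial.aeval_C,
    Algebra.algebraMap_self, RingHom.id_apply] at hz
  linear_combination -hz

theorem exists_isSquare_mul_of_isUnit {u : ℤ_[2]} (hu : IsUnit u) :
    ∃ r : ℤ_[2], (r = 1 ∨ r = -1 ∨ r = 5 ∨ r = -5) ∧ IsSquare (u * r) := by
  have key : ∀ w : ZMod 8, IsUnit w → w * 1 = 1 ∨ w * -1 = 1 ∨ w * 5 = 1 ∨ w * -5 = 1 := by
    decide
  rcases key _ (hu.map (toZModPow 3)) with h | h | h | h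
  · exact ⟨1, by simp, isSquare_of_toZModPow_three_eq_one_s17 (by rw [map_mul, map_one]; exact h)⟩
  · exact ⟨-1, by simp,
      isSquare_of_toZModPow_three_eq_one_s17 (by rw [map_mul, map_neg, map_one]; exact h)⟩
  · exact ⟨5, by simp,
      isSquare_of_toZModPow_three_eq_one_s17 (by rw [map_mul, map_ofNat]; exact h)⟩
  · exact ⟨-5, by simp,
      isSquare_of_toZModPow_three_eq_one_s17 (by rw [map_mul, map_neg, map_ofNat]; exact h)⟩

end PadicInt

namespace Padic

/-- Every nonzero `2`-adic number is, up to squares, one of `1, 2, 5, 10` or their negatives. -/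
theorem exists_mul_sq_eq {q : ℚ_[2]} (hq : q ≠ 0) :
    ∃ c : ℚ_[2], c ≠ 0 ∧
      ((q * c ^ 2 = 1 ∨ q * c ^ 2 = 2 ∨ q * c ^ 2 = 5 ∨ q * c ^ 2 = 10) ∨
        q * c ^ 2 = -1 ∨ q * c ^ 2 = -2 ∨ q * c ^ 2 = -5 ∨ q * c ^ 2 = -10) := by
  have hu : ‖q * 2 ^ (-q.valuation)‖ = 1 := by
    have h2 : ‖(2 : ℚ_[2])‖ = 2⁻¹ := by simpa using Padic.norm_p (p := 2)
    rw [norm_mul, norm_zpow, h2, norm_eq_zpow_neg_valuation hq]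
    simp only [Nat.cast_ofNat, inv_zpow', neg_neg]
    rw [← zpow_add₀ two_ne_zero, neg_add_cancel, zpow_zero]
  obtain ⟨r, hr, s, hs⟩ :=
    PadicInt.exists_isSquare_mul_of_isUnit (u := ⟨_, hu.le⟩) (PadicInt.isUnit_iff.2 hu)
  have hs' : q * 2 ^ (-q.valuation) * (r : ℚ_[2]) = s * s := by
    exact congrArg (fun x : ℤ_[2] => (x : ℚ_[2])) hs
  have hr' : (r : ℚ_[2]) = 1 ∨ (r : ℚ_[2]) = -1 ∨ (r : ℚ_[2]) = 5 ∨ (r : ℚ_[2]) = -5 := by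
    rcases hr with rfl | rfl | rfl | rfl
    · exact .inl rfl
    · exact .inr (.inl rfl)
    · exact .inr (.inr (.inl rfl))
    · exact .inr (.inr (.inr rfl))
  have hr0 : (r : ℚ_[2]) ≠ 0 := by
    rcases hr' with h | h | h | h <;> rw [h] <;> norm_num
  have h20 : (2 : ℚ_[2]) ≠ 0 := two_ne_zero
  have hs0 : (s : ℚ_[2]) ≠ 0 := by
    intro h0
    rw [h0, mul_zero] at hs'
    exact mul_ne_zero (mul_ne_zero hq (zpow_ne_zero _ h20)) hr0 hs'
  rcases Int.even_or_odd' q.valuation with ⟨m, hm | hm⟩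
  · have hp : (2 : ℚ_[2]) ^ (-q.valuation) = (2 ^ (-m)) ^ 2 := by
      rw [hm, ← zpow_natCast, ← zpow_mul]; congr 1; push_cast; ring
    refine ⟨2 ^ (-m) * r / s, by positivity, ?_⟩
    have hqc : q * (2 ^ (-m) * r / s) ^ 2 = (r : ℚ_[2]) := by
      rw [hp] at hs'
      field_simp
      linear_combination hs'
    rw [hqc]
    tauto
  · have hp : (2 : ℚ_[2]) ^ (-q.valuation) * 2 = (2 ^ (-m)) ^ 2 := by
      rw [hm, ← zpow_natCast, ← zpow_mul, ← zpow_add_one₀ h20]; congr 1; push_cast; ring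
    refine ⟨2 ^ (-m) * r / s, by positivity, ?_⟩
    have hqc : q * (2 ^ (-m) * r / s) ^ 2 = 2 * (r : ℚ_[2]) := by
      have : q * (2 ^ (-m)) ^ 2 * (r : ℚ_[2]) = 2 * (s * s) := by
        rw [← hp, ← hs']; ring
      field_simp
      linear_combination this
    rw [hqc]
    rcases hr' with h | h | h | h <;> rw [h] <;> norm_num

theorem isSquare_intCast_of_emod_eight {n : ℤ} (hn : n % 8 = 1) : IsSquare (n : ℚ_[2]) := by
  have h : IsSquare (n : ℤ_[2]) := by
    apply PadicInt.isSquare_of_toZModPow_three_eq_one_s17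
    rw [map_intCast]
    have := (ZMod.intCast_eq_intCast_iff n 1 8).2 hn
    simpa using this
  simpa using h.map (PadicInt.Coe.ringHom (p := 2))

/-- If `d * e` is not a square, the form `x² + y² - d b² - e c²` is isotropic over `ℚ₂`. -/
theorem exists_sq_add_sq_eq_mul_sq_add_mul_sq {d e : ℚ_[2]} (hd : d ≠ 0) (he : e ≠ 0)
    (hde : ¬ IsSquare (d * e)) :
    ∃ x y b c : ℚ_[2], (b ≠ 0 ∨ c ≠ 0) ∧ x ^ 2 + y ^ 2 = d * b ^ 2 + e * c ^ 2 := by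
  obtain ⟨b, hb, hdb⟩ := exists_mul_sq_eq hd
  obtain ⟨c, hc, hec⟩ := exists_mul_sq_eq he
  have hne : d * b ^ 2 ≠ e * c ^ 2 := fun h => hde ⟨e * c / b, by
    field_simp
    linear_combination h⟩
  have sum_sq : ∀ t : ℚ_[2], t = 1 ∨ t = 2 ∨ t = 5 ∨ t = 10 → ∃ x y : ℚ_[2], x ^ 2 + y ^ 2 = t := by
    rintro t (rfl | rfl | rfl | rfl)
    · exact ⟨1, 0, by norm_num⟩
    · exact ⟨1, 1, by norm_num⟩
    · exact ⟨2, 1, by norm_num⟩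
    · exact ⟨3, 1, by norm_num⟩
  rcases hdb with hdb | hdb
  · obtain ⟨x, y, hxy⟩ := sum_sq _ hdb
    exact ⟨x, y, b, 0, .inl hb, by rw [hxy]; ring⟩
  rcases hec with hec | hec
  · obtain ⟨x, y, hxy⟩ := sum_sq _ hec
    exact ⟨x, y, 0, c, .inr hc, by rw [hxy]; ring⟩
  obtain ⟨i, hi⟩ := isSquare_intCast_of_emod_eight (n := -7) (by norm_num)
  obtain ⟨j, hj⟩ := isSquare_intCast_of_emod_eight (n := -15) (by norm_num)
  push_cast at hi hj
  suffices h : ∃ x y : ℚ_[2], x ^ 2 + y ^ 2 = d * b ^ 2 + e * c ^ 2 by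
    obtain ⟨x, y, hxy⟩ := h
    exact ⟨x, y, b, c, .inl hb, hxy⟩
  generalize d * b ^ 2 = r at *
  generalize e * c ^ 2 = r' at *
  rcases hdb with rfl | rfl | rfl | rfl <;> rcases hec with rfl | rfl | rfl | rfl <;>
    first
    | exact absurd rfl hne
    | exact ⟨i, 0, by linear_combination -hi⟩
    | exact ⟨i, 1, by linear_combination -hi⟩
    | exact ⟨i, 2, by linear_combination -hi⟩
    | exact ⟨2 * i, 4, by linear_combination -4 * hi⟩
    | exact ⟨j, 0, by linear_combination -hj⟩
    | exact ⟨j, 2, by linear_combination -hj⟩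

end Padic

section Quadratic

variable {K L : Type*} [Field K] [Field L] [Algebra K L]

/-- A quadratic extension in characteristic different from `2` is generated by a square root `α`,
and the norm form is `a² - d b²` with `d = α²`. -/
theorem exists_sq_eq_algebraMap_and_norm_eq (h2 : (2 : K) ≠ 0) (hL : finrank K L = 2) :
    ∃ (d : K) (α : L), α ^ 2 = algebraMap K L d ∧ ¬ IsSquare d ∧
      ∀ a b : K, Algebra.norm K (algebraMap K L a + algebraMap K L b * α) = a ^ 2 - d * b ^ 2 := by
  have hfin : FiniteDimensional K L := .of_finrank_pos (by omega)
  obtain ⟨β, hβ⟩ : ∃ β : L, β ∉ (algebraMap K L).range := by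
    by_contra! hall
    have : (⊥ : Subalgebra K L) = ⊤ := by
      refine eq_top_iff.2 fun x _ => ?_
      obtain ⟨y, hy⟩ := hall x
      exact Algebra.mem_bot.2 ⟨y, hy⟩
    have := Subalgebra.bot_eq_top_iff_finrank_eq_one.1 this
    omega
  have indep : ∀ γ : L, γ ∉ (algebraMap K L).range → LinearIndependent K ![1, γ] := by
    intro γ hγ
    refine (LinearIndependent.pair_iff' one_ne_zero).2 fun a ha => hγ ⟨a, ?_⟩
    rw [← ha, Algebra.smul_def, mul_one]
  have hspan := (indep β hβ).span_eq_top_of_card_eq_finrank' (by simp [hL])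
  have hβ2 : β ^ 2 ∈ Submodule.span K (Set.range ![1, β]) := by rw [hspan]; trivial
  rw [Matrix.range_cons, Matrix.range_cons, Matrix.range_empty, Set.union_empty,
    Set.singleton_union, Submodule.mem_span_pair] at hβ2
  obtain ⟨p, q, hpq⟩ := hβ2
  rw [Algebra.smul_def, Algebra.smul_def, mul_one] at hpq
  have h2L : algebraMap K L 2 ≠ 0 := by simpa using h2
  set α : L := algebraMap K L 2 * β - algebraMap K L q with hα
  have hα2 : α ^ 2 = algebraMap K L (q ^ 2 + 4 * p) := by
    simp only [hα, map_add, map_mul, map_pow, map_ofNat]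
    linear_combination -4 * hpq
  have hαK : α ∉ (algebraMap K L).range := by
    rintro ⟨t, ht⟩
    refine hβ ⟨(t + q) / 2, ?_⟩
    rw [map_div₀, div_eq_iff h2L, map_add, ht, hα]
    ring
  refine ⟨q ^ 2 + 4 * p, α, hα2, ?_, ?_⟩
  · rintro ⟨t, ht⟩
    rw [ht, map_mul, ← pow_two] at hα2
    rcases sq_eq_sq_iff_eq_or_eq_neg.1 hα2 with h | h
    · exact hαK ⟨t, h.symm⟩
    · exact hαK ⟨-t, by rw [map_neg, h]⟩
  · intro a b
    let B : Basis (Fin 2) K L := basisOfLinearIndependentOfCardEqFinrank (indep α hαK) (by simp [hL])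
    have hB0 : B 0 = 1 := by simp [B]
    have hB1 : B 1 = α := by simp [B]
    have e0 : (algebraMap K L a + algebraMap K L b * α) * B 0 = a • B 0 + b • B 1 := by
      rw [hB0, hB1, Algebra.smul_def, Algebra.smul_def]; ring
    have e1 : (algebraMap K L a + algebraMap K L b * α) * B 1 =
        ((q ^ 2 + 4 * p) * b) • B 0 + a • B 1 := by
      rw [hB0, hB1, Algebra.smul_def, Algebra.smul_def, map_mul, ← hα2]; ring
    rw [Algebra.norm_eq_matrix_det B, Matrix.det_fin_two]
    simp only [Algebra.leftMulMatrix_eq_repr_mul, e0, e1, map_add, map_smul, Basis.repr_self]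
    simp
    ring

theorem mul_mem_normGroup {x y : K} (hx : x ∈ normGroup K L) (hy : y ∈ normGroup K L) :
    x * y ∈ normGroup K L := by
  obtain ⟨s, hs, rfl⟩ := hx
  obtain ⟨t, ht, rfl⟩ := hy
  exact ⟨s * t, mul_ne_zero hs ht, map_mul _ _ _⟩

theorem inv_mem_normGroup {x : K} (hx : x ∈ normGroup K L) : x⁻¹ ∈ normGroup K L := by
  obtain ⟨s, hs, rfl⟩ := hx
  exact ⟨s⁻¹, inv_ne_zero hs,
    eq_inv_of_mul_eq_one_left (by rw [← map_mul, inv_mul_cancel₀ hs, map_one])⟩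

theorem ne_zero_of_mem_normGroup [FiniteDimensional K L] {x : K} (hx : x ∈ normGroup K L) :
    x ≠ 0 := by
  obtain ⟨s, hs, rfl⟩ := hx
  exact Algebra.norm_ne_zero_iff.2 hs

theorem sq_mem_normGroup (hL : finrank K L = 2) {x : K} (hx : x ≠ 0) : x ^ 2 ∈ normGroup K L :=
  ⟨algebraMap K L x, by simpa using hx, by rw [Algebra.norm_algebraMap, hL]⟩

end Quadratic

/-- Lemma 6.2: let `L/ℚ₂` be a ramified quadratic extension and `e ∈ ℚ₂*` a non-square
such that `ℚ₂(√e)` is not isomorphic to `L` (i.e. `e` is not a square in `L`). If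
`-1 ∉ N_{L/ℚ₂}(L*)` or `e ∉ N_{L/ℚ₂}(L*)`, then either `-e ∉ N_{L/ℚ₂}(L*)`, or there
exists `x ∈ ℚ₂*` with `x ∉ N_{L/ℚ₂}(L*)` and `x² - e ∉ N_{L/ℚ₂}(L*)`. -/
theorem stmt_17
    (L : Type*) [Field L] [Algebra ℚ_[2] L] (hL2 : finrank ℚ_[2] L = 2)
    (vL : L → ℤ) (hvL : IsNormalizedValuation 2 vL)
    (hram : ∀ x : ℚ_[2], x ≠ 0 → vL (algebraMap ℚ_[2] L x) = 2 * x.valuation)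
    (e : ℚ_[2]) (he0 : e ≠ 0) (he : ¬ IsSquare e)
    (hnotiso : ¬ IsSquare (algebraMap ℚ_[2] L e))
    (h : (-1 : ℚ_[2]) ∉ normGroup ℚ_[2] L ∨ e ∉ normGroup ℚ_[2] L) :
    -e ∉ normGroup ℚ_[2] L ∨
      ∃ x : ℚ_[2], x ≠ 0 ∧ x ∉ normGroup ℚ_[2] L ∧ x ^ 2 - e ∉ normGroup ℚ_[2] L := by
  have hfin : FiniteDimensional ℚ_[2] L := .of_finrank_pos (by omega)
  by_cases hneg_e : -e ∈ normGroup ℚ_[2] L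
  swap
  · exact .inl hneg_e
  right
  have hneg_one : (-1 : ℚ_[2]) ∉ normGroup ℚ_[2] L := fun h1 =>
    h.elim (fun h' => h' h1) fun h' => h' (by simpa using mul_mem_normGroup h1 hneg_e)
  have neg_notMem : ∀ y ∈ normGroup ℚ_[2] L, -y ∉ normGroup ℚ_[2] L := fun y hy hy' =>
    hneg_one (by
      have := mul_mem_normGroup hy' (inv_mem_normGroup hy)
      rwa [neg_mul, mul_inv_cancel₀ (ne_zero_of_mem_normGroup hy)] at this)
  obtain ⟨d, α, hα, hd, hnorm⟩ :=
    exists_sq_eq_algebraMap_and_norm_eq (K := ℚ_[2]) (L := L) two_ne_zero hL2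
  have hd0 : d ≠ 0 := by
    rintro rfl
    exact hd IsSquare.zero
  have form_mem : ∀ a b : ℚ_[2], a ^ 2 - d * b ^ 2 ≠ 0 →
      a ^ 2 - d * b ^ 2 ∈ normGroup ℚ_[2] L := fun a b hab =>
    ⟨_, fun h0 => hab (by rw [← hnorm, h0, Algebra.norm_zero]), hnorm a b⟩
  have hα0 : α ≠ 0 := by
    rintro rfl
    rw [zero_pow two_ne_zero, eq_comm, map_eq_zero] at hα
    exact hd0 hα
  have hde : ¬ IsSquare (d * e) := by
    rintro ⟨s, hs⟩
    refine hnotiso ⟨algebraMap ℚ_[2] L s / α, ?_⟩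
    have := congrArg (algebraMap ℚ_[2] L) hs
    rw [map_mul, map_mul, ← hα] at this
    field_simp
    linear_combination this
  have form_ne_zero : ∀ a b : ℚ_[2], b ≠ 0 → a ^ 2 - d * b ^ 2 ≠ 0 := fun a b hb hab =>
    hd ⟨a / b, by field_simp; linear_combination -hab⟩
  obtain ⟨x, a, b, z, hbz, hxa⟩ := Padic.exists_sq_add_sq_eq_mul_sq_add_mul_sq hd0 he0 hde
  have hx : x ≠ 0 := by
    rintro rfl
    have hez : a ^ 2 - d * b ^ 2 = e * z ^ 2 := by linear_combination hxa
    rcases eq_or_ne z 0 with rfl | hz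
    · exact form_ne_zero a b (by simpa using hbz) (by rw [hez]; ring)
    · have hmem := form_mem a b (by rw [hez]; positivity)
      rw [hez] at hmem
      refine neg_notMem _ hneg_e ?_
      have := mul_mem_normGroup hmem (inv_mem_normGroup (sq_mem_normGroup hL2 hz))
      rwa [mul_inv_cancel_right₀ (pow_ne_zero 2 hz), ← neg_neg e] at this
  have hf : a ^ 2 - d * b ^ 2 = -(x ^ 2 - e * z ^ 2) := by linear_combination hxa
  have hf0 : a ^ 2 - d * b ^ 2 ≠ 0 := by
    rcases eq_or_ne z 0 with rfl | hz
    · exact form_ne_zero a b (by simpa using hbz)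
    · rw [hf]
      exact fun h0 => he ⟨x / z, by field_simp; linear_combination h0⟩
  have hnot : x ^ 2 - e * z ^ 2 ∉ normGroup ℚ_[2] L := by
    have := neg_notMem _ (form_mem a b hf0)
    rwa [hf, neg_neg] at this
  have hz : z ≠ 0 := by
    rintro rfl
    exact hnot (by simpa using sq_mem_normGroup hL2 hx)
  have hnot' : (x / z) ^ 2 - e ∉ normGroup ℚ_[2] L := fun hmem => hnot (by
    have := mul_mem_normGroup hmem (sq_mem_normGroup hL2 hz)
    convert this using 1
    field_simp)
  by_cases hxz : x / z ∈ normGroup ℚ_[2] L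
  · exact ⟨-(x / z), neg_ne_zero.2 (div_ne_zero hx hz), neg_notMem _ hxz, by rwa [neg_sq]⟩
  · exact ⟨x / z, div_ne_zero hx hz, hxz, hnot'⟩
end

section
/- Let d, e ∈ ℚ₂* be non-squares with de ∉ (ℚ₂*)², let L = ℚ₂(√d), and suppose L/ℚ₂ is ramified. Then either −e ∉ N_{L/ℚ₂}(L*), or there exists x ∈ ℚ₂* with x ∉ N_{L/ℚ₂}(L*) and x² − e ∉ N_{L/ℚ₂}(L*). -/
open Module

/-- A nonzero finite family of `p`-adic numbers is a multiple of a family of `p`-adic integers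
having an entry equal to `1`. -/
lemma exists_primitive_scaling {p : ℕ} [Fact p.Prime] {ι : Type*} [Finite ι] (f : ι → ℚ_[p])
    (hf : ∃ i, f i ≠ 0) :
    ∃ k : ℚ_[p], k ≠ 0 ∧ ∃ g : ι → ℤ_[p], (∀ i, f i = k * g i) ∧ ∃ i, g i = 1 := by
  obtain ⟨j, hj⟩ := hf
  have : Nonempty ι := ⟨j⟩
  obtain ⟨i, hi⟩ := Finite.exists_max fun i => ‖f i‖
  have hpos : 0 < ‖f i‖ := (norm_pos_iff.2 hj).trans_le (hi j)
  have hi0 : f i ≠ 0 := norm_pos_iff.1 hpos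
  refine ⟨f i, hi0, fun l => ⟨f l / f i, ?_⟩, fun l => ?_, i, ?_⟩
  · rw [norm_div]
    exact (div_le_one hpos).2 (hi l)
  · exact (mul_div_cancel₀ (f l) hi0).symm
  · exact Subtype.ext (div_self hi0)

/-- The equation `a z² + d v² = u²` has no solution modulo `16` with an entry of square `1`. -/
def AnisotropicModSixteen (a d : ZMod (2 ^ 4)) : Prop :=
  ∀ p ∈ [(0 : ZMod (2 ^ 4)), 1, 4, 9], ∀ q ∈ [(0 : ZMod (2 ^ 4)), 1, 4, 9],
    ∀ r ∈ [(0 : ZMod (2 ^ 4)), 1, 4, 9], a * p + d * q = r → p ≠ 1 ∧ q ≠ 1 ∧ r ≠ 1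

instance (a d : ZMod (2 ^ 4)) : Decidable (AnisotropicModSixteen a d) := by
  unfold AnisotropicModSixteen
  infer_instance

lemma AnisotropicModSixteen.ne {a d : ℤ} (h : AnisotropicModSixteen a d) {z : ℚ_[2]}
    (hz : z ≠ 0) (u v : ℚ_[2]) : a * z ^ 2 ≠ u ^ 2 - d * v ^ 2 := by
  intro heq
  obtain ⟨k, hk, g, hg, i, hi⟩ := exists_primitive_scaling ![z, v, u] ⟨0, hz⟩
  have hz' := hg 0
  have hv' := hg 1
  have hu' := hg 2
  simp only [Matrix.cons_val] at hz' hv' hu'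
  have hint : (a : ℤ_[2]) * g 0 ^ 2 + d * g 1 ^ 2 = g 2 ^ 2 := by
    apply Subtype.coe_injective
    push_cast
    apply mul_left_cancel₀ (pow_ne_zero 2 hk)
    rw [hz', hv', hu'] at heq
    linear_combination heq
  have hmod := congrArg (PadicInt.toZModPow 4) hint
  simp only [map_add, map_mul, map_pow, map_intCast] at hmod
  have hsq : ∀ x : ZMod (2 ^ 4), x ^ 2 ∈ [(0 : ZMod (2 ^ 4)), 1, 4, 9] := by decide
  obtain ⟨h0, h1, h2⟩ := h _ (hsq _) _ (hsq _) _ (hsq _) hmod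
  fin_cases i
  · exact h0 (by simp_all)
  · exact h1 (by simp_all)
  · exact h2 (by simp_all)

lemma PadicInt.isSquare_of_norm_sub_one_lt {p : ℕ} [Fact p.Prime] {x : ℤ_[p]}
    (hx : ‖x - 1‖ < ‖(2 : ℤ_[p])‖ ^ 2) : IsSquare x := by
  obtain ⟨y, hy, -⟩ := hensels_lemma (p := p) (R := ℤ_[p])
    (F := (Polynomial.X ^ 2 - Polynomial.C x)) (a := 1) (by
      rw [norm_sub_rev] at hx
      simpa [one_add_one_eq_two] using hx)
  refine ⟨y, ?_⟩
  simp only [map_sub, map_pow, Polynomial.aeval_X, Polynomial.aeval_C] at hy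
  simpa [sq] using (sub_eq_zero.1 hy).symm

/-- The unit square classes of `ℚ₂` are represented by `±1, ±5`. -/
lemma PadicInt.exists_unit_square_class (x : ℤ_[2]ˣ) :
    ∃ r ∈ [(1 : ℤ), -1, 5, -5], ∃ y : ℤ_[2], (x : ℤ_[2]) = r * y ^ 2 := by
  have hfin : ∀ m : ZMod (2 ^ 3), IsUnit m → ∃ r ∈ [(1 : ℤ), -1, 5, -5], m = (r : ZMod (2 ^ 3)) := by
    decide
  obtain ⟨r, hr, hm⟩ := hfin _ (x.isUnit.map (PadicInt.toZModPow 3))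
  refine ⟨r, hr, ?_⟩
  have hodd : ¬ ((2 : ℕ) : ℤ) ∣ r := by
    clear hm
    revert r
    decide
  have hunit : IsUnit (r : ℤ_[2]) := by
    rw [PadicInt.isUnit_iff]
    refine le_antisymm (PadicInt.norm_le_one _) (not_lt.1 fun h => hodd ?_)
    exact (PadicInt.norm_int_lt_one_iff_dvd r).1 h
  obtain ⟨s, hs⟩ := hunit
  have hclose : ‖(x : ℤ_[2]) - r‖ ≤ ((2 : ℕ) : ℝ) ^ (-(3 : ℕ) : ℤ) := by
    rw [PadicInt.norm_le_pow_iff_mem_span_pow, ← PadicInt.ker_toZModPow, RingHom.mem_ker, map_sub,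
      hm, map_intCast, sub_self]
  have hsquare : IsSquare ((x : ℤ_[2]) * (s⁻¹ : ℤ_[2]ˣ)) := by
    apply PadicInt.isSquare_of_norm_sub_one_lt
    have h2 : ‖(2 : ℤ_[2])‖ = 2⁻¹ := by simpa using PadicInt.norm_p (p := 2)
    have hfac : (x : ℤ_[2]) * (s⁻¹ : ℤ_[2]ˣ) - 1 = (x - r) * (s⁻¹ : ℤ_[2]ˣ) := by
      rw [← hs, sub_mul, Units.mul_inv]
    rw [hfac, norm_mul, PadicInt.norm_units, mul_one, h2]
    refine hclose.trans_lt ?_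
    norm_num
  obtain ⟨y, hy⟩ := hsquare
  refine ⟨y, ?_⟩
  rw [sq, ← hy, ← hs, mul_left_comm, Units.mul_inv, mul_one]

/-- The square classes of `ℚ₂` are represented by `±1, ±5, ±2, ±10`. -/
lemma Padic.exists_square_class {x : ℚ_[2]} (hx : x ≠ 0) :
    ∃ r ∈ [(1 : ℤ), -1, 5, -5, 2, -2, 10, -10], ∃ c : ℚ_[2], c ≠ 0 ∧ x = r * c ^ 2 := by
  have h2 : (2 : ℚ_[2]) ≠ 0 := two_ne_zero
  have hnorm : ‖x * 2 ^ (-x.valuation)‖ = 1 := by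
    have h2n : ‖(2 : ℚ_[2])‖ = 2⁻¹ := by simpa using Padic.norm_p (p := 2)
    rw [norm_mul, norm_zpow, h2n, Padic.norm_eq_zpow_neg_valuation hx, inv_zpow, zpow_neg, zpow_neg,
      inv_inv]
    exact inv_mul_cancel₀ (zpow_ne_zero _ two_ne_zero)
  obtain ⟨r, hr, y, hy⟩ := PadicInt.exists_unit_square_class (PadicInt.mkUnits hnorm)
  have hy' : x * 2 ^ (-x.valuation) = r * (y : ℚ_[2]) ^ 2 := by
    simpa using congrArg (Subtype.val) hy
  have hxy : x = r * (y : ℚ_[2]) ^ 2 * 2 ^ x.valuation := by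
    rw [← hy', mul_assoc, ← zpow_add₀ h2, neg_add_cancel, zpow_zero, mul_one]
  have hy0 : (y : ℚ_[2]) ≠ 0 := by
    rintro h
    rw [h] at hxy
    exact hx (by simpa using hxy)
  obtain ⟨n, hn⟩ := Int.even_or_odd' x.valuation
  refine hn.elim (fun hn => ⟨r, ?_, y * 2 ^ n, ?_, ?_⟩) (fun hn => ⟨2 * r, ?_, y * 2 ^ n, ?_, ?_⟩)
  · clear hy hy' hxy
    revert r
    decide
  · exact mul_ne_zero hy0 (zpow_ne_zero _ h2)
  · rw [hxy, hn, mul_comm 2 n, zpow_mul, zpow_ofNat]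
    ring
  · clear hy hy' hxy
    revert r
    decide
  · exact mul_ne_zero hy0 (zpow_ne_zero _ h2)
  · rw [hxy, hn, zpow_add₀ h2, mul_comm 2 n, zpow_mul, zpow_ofNat, zpow_one]
    push_cast
    ring

/-- Coordinates and norm form of a quadratic extension generated by a square root of `d`. -/
lemma exists_coordinates_and_norm_eq {K L : Type*} [Field K] [Field L] [Algebra K L]
    (hL2 : finrank K L = 2) {d : K} (hd : ¬ IsSquare d) {s : L} (hs : s ^ 2 = algebraMap K L d)
    (t : L) : ∃ u v : K, t = algebraMap K L u + algebraMap K L v * s ∧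
      Algebra.norm K t = u ^ 2 - d * v ^ 2 := by
  have hli : LinearIndependent K ![1, s] := by
    rw [LinearIndependent.pair_iff]
    intro a b hab
    simp only [Algebra.smul_def, mul_one] at hab
    have hb : b = 0 := by
      by_contra hb
      refine hd ⟨a / b, (algebraMap K L).injective ?_⟩
      have hb' : algebraMap K L b ≠ 0 := by simpa using hb
      rw [← hs, map_mul, map_div₀]
      field_simp
      linear_combination (algebraMap K L b * s - algebraMap K L a) * hab
    subst hb
    simpa using hab
  let B := basisOfLinearIndependentOfCardEqFinrank hli (by simp [hL2])
  have hB0 : B 0 = 1 := by simp [B]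
  have hB1 : B 1 = s := by simp [B]
  have hsum : ∀ x y : K, algebraMap K L x + algebraMap K L y * s = x • B 0 + y • B 1 := by
    intro x y
    simp [hB0, hB1, Algebra.smul_def]
  have ht : t = algebraMap K L (B.repr t 0) + algebraMap K L (B.repr t 1) * s := by
    rw [hsum, ← Fin.sum_univ_two (f := fun i => B.repr t i • B i), B.sum_repr]
  refine ⟨B.repr t 0, B.repr t 1, ht, ?_⟩
  generalize B.repr t 0 = u at ht ⊢
  generalize B.repr t 1 = v at ht ⊢
  have h0 : t * B 0 = u • B 0 + v • B 1 := by rw [hB0, mul_one, ht, hsum, hB0]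
  have h1 : t * B 1 = (d * v) • B 0 + u • B 1 := by
    rw [← hsum, hB1, ht, map_mul, ← hs]
    ring
  rw [Algebra.norm_eq_matrix_det B, Matrix.det_fin_two]
  simp only [Algebra.leftMulMatrix_eq_repr_mul, h0, h1, map_add, map_smul, B.repr_self]
  simp
  ring

/-- The quadratic extension generated by a square root of `5` is not ramified over `ℚ₂`. -/
lemma not_ramified_of_sq_eq_five {L : Type*} [Field L] [Algebra ℚ_[2] L]
    {s : L} (hs : s ^ 2 = 5)
    (hcoord : ∀ t : L, ∃ u v : ℚ_[2], t = algebraMap ℚ_[2] L u + algebraMap ℚ_[2] L v * s)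
    {vL : L → ℤ} (hvL : IsNormalizedValuation 2 vL) :
    ¬ ∀ x : ℚ_[2], x ≠ 0 → vL (algebraMap ℚ_[2] L x) = 2 * x.valuation := by
  intro hram
  obtain ⟨hmul, hadd, hsurj, -⟩ := hvL
  have : CharZero L := charZero_of_injective_algebraMap (algebraMap ℚ_[2] L).injective
  have h1 : vL 1 = 0 := by simpa using hram 1 one_ne_zero
  have hneg : vL (-1) = 0 := by
    have := hmul (-1) (-1) (by simp) (by simp)
    rw [neg_one_mul, neg_neg, h1] at this
    lia
  let O : L → Prop := fun x => x ≠ 0 → 0 ≤ vL x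
  have hOadd : ∀ x y, O x → O y → O (x + y) := by
    intro x y hx hy hxy
    rcases eq_or_ne x 0 with rfl | hx0
    · rw [zero_add] at hxy ⊢
      exact hy hxy
    rcases eq_or_ne y 0 with rfl | hy0
    · rw [add_zero] at hxy ⊢
      exact hx hxy
    exact (le_min (hx hx0) (hy hy0)).trans (hadd x y hx0 hy0 hxy)
  have hOmul : ∀ x y, O x → O y → O (x * y) := by
    intro x y hx hy hxy
    have hx0 := left_ne_zero_of_mul hxy
    have hy0 := right_ne_zero_of_mul hxy
    rw [hmul x y hx0 hy0]
    exact add_nonneg (hx hx0) (hy hy0)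
  have hOint : ∀ x : ℤ_[2], O (algebraMap ℚ_[2] L x) := by
    intro x hx
    have hx0 : (x : ℚ_[2]) ≠ 0 := fun h => hx (by simp [h])
    rw [hram _ hx0]
    have := (Padic.norm_le_one_iff_val_nonneg (x : ℚ_[2])).1 x.2
    positivity
  obtain ⟨w, hw⟩ : ∃ w : L, w = (1 + s) / 2 := ⟨_, rfl⟩
  have hww : w * (w - 1) = 1 := by
    rw [hw]
    linear_combination hs / 4
  have hOw : O w ∧ O (1 - w) := by
    have hw0 : w ≠ 0 := left_ne_zero_of_mul_eq_one hww
    have hw1 : w - 1 ≠ 0 := right_ne_zero_of_mul_eq_one hww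
    have hsum := hmul w (w - 1) hw0 hw1
    rw [hww, h1] at hsum
    have ha := hadd (w - 1) 1 hw1 one_ne_zero (by simpa using hw0)
    have hb := hadd w (-1) hw0 (by simp) (by simpa [sub_eq_add_neg] using hw1)
    rw [sub_add_cancel, h1] at ha
    rw [← sub_eq_add_neg, hneg] at hb
    have hflip : vL (1 - w) = vL (w - 1) := by
      have := hmul (-1) (w - 1) (by simp) hw1
      rw [hneg, neg_one_mul, neg_sub] at this
      lia
    exact ⟨fun _ => by lia, fun _ => by lia⟩
  obtain ⟨t, ht0, ht⟩ := hsurj 1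
  obtain ⟨u, v, htuv⟩ := hcoord t
  have htw : t = algebraMap ℚ_[2] L (u - v) + algebraMap ℚ_[2] L (2 * v) * w := by
    rw [htuv, hw, map_sub, map_mul, map_ofNat]
    ring
  obtain ⟨k, hk, g, hg, i, hi⟩ := exists_primitive_scaling ![u - v, 2 * v] (by
    by_contra! h
    have h0 := h 0
    have h1 := h 1
    simp only [Matrix.cons_val] at h0 h1
    rw [htw, h0, h1] at ht0
    simp at ht0)
  have hg0 := hg 0
  have hg1 := hg 1
  simp only [Matrix.cons_val] at hg0 hg1
  have hunit : IsUnit (g 0 ^ 2 + g 0 * g 1 - g 1 ^ 2) := by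
    have hfin : ∀ a b : ZMod (2 ^ 1), a = 1 ∨ b = 1 → a ^ 2 + a * b - b ^ 2 ≠ 0 := by decide
    by_contra hnot
    rw [PadicInt.not_isUnit_iff, PadicInt.norm_lt_one_iff_dvd] at hnot
    have hker := Ideal.mem_span_singleton.2 hnot
    rw [← pow_one ((2 : ℕ) : ℤ_[2]), ← PadicInt.ker_toZModPow, RingHom.mem_ker] at hker
    simp only [map_sub, map_add, map_mul, map_pow] at hker
    refine hfin _ _ ?_ hker
    fin_cases i
    · exact Or.inl (by simp_all)
    · exact Or.inr (by simp_all)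
  set A := algebraMap ℚ_[2] L (g 0) with hA
  set B := algebraMap ℚ_[2] L (g 1) with hB
  have hfactor : t = algebraMap ℚ_[2] L k * (A + B * w) := by
    rw [htw, hg0, hg1, map_mul, map_mul]
    ring
  have hnorm : (A + B * w) * (A + B * (1 - w)) =
      algebraMap ℚ_[2] L ((g 0 ^ 2 + g 0 * g 1 - g 1 ^ 2 : ℤ_[2]) : ℚ_[2]) := by
    push_cast
    linear_combination (-B ^ 2) * hww
  have hq0 : ((g 0 ^ 2 + g 0 * g 1 - g 1 ^ 2 : ℤ_[2]) : ℚ_[2]) ≠ 0 := by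
    rw [Ne, PadicInt.coe_eq_zero]
    exact hunit.ne_zero
  have hval : ((g 0 ^ 2 + g 0 * g 1 - g 1 ^ 2 : ℤ_[2]) : ℚ_[2]).valuation = 0 := by
    obtain ⟨y, hy⟩ := hunit.exists_right_inv
    have := congrArg PadicInt.valuation hy
    rw [PadicInt.valuation_mul hunit.ne_zero (right_ne_zero_of_mul_eq_one hy),
      PadicInt.valuation_one] at this
    rw [PadicInt.valuation_coe]
    lia
  have hprod0 : (A + B * w) * (A + B * (1 - w)) ≠ 0 := by
    rw [hnorm]
    exact (map_ne_zero _).2 hq0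
  have hv := hram _ hq0
  rw [← hnorm, hval, hmul _ _ (left_ne_zero_of_mul hprod0) (right_ne_zero_of_mul hprod0)] at hv
  have hp := hOadd _ _ (hOint (g 0)) (hOmul _ _ (hOint (g 1)) hOw.1) (left_ne_zero_of_mul hprod0)
  have hq := hOadd _ _ (hOint (g 0)) (hOmul _ _ (hOint (g 1)) hOw.2) (right_ne_zero_of_mul hprod0)
  rw [hfactor, hmul _ _ (by simpa using hk) (left_ne_zero_of_mul hprod0), hram k hk] at ht
  lia

lemma exists_anisotropic_witness : ∀ d ∈ [(-1 : ℤ), -5, 2, -2, 10, -10],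
    ∃ y ∈ [(-1 : ℤ), 2, -2, 3], AnisotropicModSixteen y d ∧
      ∀ e ∈ [(-1 : ℤ), 5, -5, 2, -2, 10, -10], e = d ∨ AnisotropicModSixteen (-e : ℤ) d ∨
        AnisotropicModSixteen (y ^ 2 - e : ℤ) d ∧ AnisotropicModSixteen (d ^ 2 - e : ℤ) d := by
  decide

/-- Theorem 1.3(2), number-theoretic content: let `d, e ∈ ℚ₂*` be non-squares with
`de ∉ (ℚ₂*)²`, and suppose `L = ℚ₂(√d)` is ramified over `ℚ₂`. Then either
`-e ∉ N_{L/ℚ₂}(L*)`, or there exists `x ∈ ℚ₂*` with `x ∉ N_{L/ℚ₂}(L*)` and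
`x² - e ∉ N_{L/ℚ₂}(L*)`. -/
theorem stmt_18
    (d e : ℚ_[2]) (hd0 : d ≠ 0) (he0 : e ≠ 0)
    (hd : ¬ IsSquare d) (he : ¬ IsSquare e) (hde : ¬ IsSquare (d * e))
    (L : Type*) [Field L] [Algebra ℚ_[2] L] (hL2 : finrank ℚ_[2] L = 2)
    (hLd : ∃ s : L, s ^ 2 = algebraMap ℚ_[2] L d)
    (vL : L → ℤ) (hvL : IsNormalizedValuation 2 vL)
    (hram : ∀ x : ℚ_[2], x ≠ 0 → vL (algebraMap ℚ_[2] L x) = 2 * x.valuation) :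
    -e ∉ normGroup ℚ_[2] L ∨
      ∃ x : ℚ_[2], x ≠ 0 ∧ x ∉ normGroup ℚ_[2] L ∧ x ^ 2 - e ∉ normGroup ℚ_[2] L := by
  obtain ⟨s, hs⟩ := hLd
  obtain ⟨D, hD, b, hb, rfl⟩ := Padic.exists_square_class hd0
  obtain ⟨E, hE, c, hc, rfl⟩ := Padic.exists_square_class he0
  have hcoord := exists_coordinates_and_norm_eq hL2 hd hs
  have hD0 : (D : ℚ_[2]) ≠ 0 := left_ne_zero_of_mul hd0
  have hD1 : D ≠ 1 := by
    rintro rfl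
    exact hd ⟨b, by push_cast; ring⟩
  have hE1 : E ≠ 1 := by
    rintro rfl
    exact he ⟨c, by push_cast; ring⟩
  have hED : E ≠ D := by
    rintro rfl
    exact hde ⟨E * b * c, by ring⟩
  have hD5 : D ≠ 5 := by
    rintro rfl
    have hb' : algebraMap ℚ_[2] L b ≠ 0 := by simpa using hb
    refine not_ramified_of_sq_eq_five (s := s / algebraMap ℚ_[2] L b) ?_ (fun t => ?_) hvL hram
    · rw [div_pow, hs, map_mul, map_pow]
      field_simp
      exact map_ofNat _ 5
    · obtain ⟨u, v, huv, -⟩ := hcoord t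
      refine ⟨u, v * b, huv.trans ?_⟩
      rw [map_mul]
      field_simp
  have hnorm : ∀ x ∈ normGroup ℚ_[2] L, ∃ u v : ℚ_[2], x = u ^ 2 - D * v ^ 2 := by
    rintro x ⟨t, -, rfl⟩
    obtain ⟨u, v, -, h⟩ := hcoord t
    exact ⟨u, b * v, h.trans (by ring)⟩
  have hnot : ∀ a : ℤ, AnisotropicModSixteen a D → ∀ x : ℚ_[2], x = a * c ^ 2 →
      x ∉ normGroup ℚ_[2] L := by
    rintro a ha x rfl hmem
    obtain ⟨u, v, huv⟩ := hnorm _ hmem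
    exact ha.ne hc u v huv
  obtain ⟨y, hy, hyD, hwit⟩ := exists_anisotropic_witness D (by simp_all)
  have hy0 : (y : ℚ_[2]) ≠ 0 := by
    have : y ≠ 0 := by
      rintro rfl
      simp at hy
    exact_mod_cast this
  rcases hwit E (by simp_all) with h | h | ⟨h, h'⟩
  · exact absurd h hED
  · left
    exact hnot _ h _ (by push_cast; ring)
  · right
    by_cases hcN : ∃ u v : ℚ_[2], c = u ^ 2 - D * v ^ 2
    · obtain ⟨u, v, huv⟩ := hcN
      refine ⟨y * c, mul_ne_zero hy0 hc, fun hmem => ?_, ?_⟩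
      · obtain ⟨u', v', huv'⟩ := hnorm _ hmem
        refine hyD.ne hc (u * u' + D * v * v') (u * v' + v * u') ?_
        calc (y : ℚ_[2]) * c ^ 2 = y * c * c := by ring
          _ = (u' ^ 2 - D * v' ^ 2) * (u ^ 2 - D * v ^ 2) := by rw [huv', ← huv]
          _ = _ := by ring
      · exact hnot _ h _ (by push_cast; ring)
    · refine ⟨-D * c, mul_ne_zero (neg_ne_zero.2 hD0) hc, fun hmem => ?_, ?_⟩
      · obtain ⟨u, v, huv⟩ := hnorm _ hmem
        refine hcN ⟨v, u / D, ?_⟩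
        field_simp
        linear_combination -huv
      · exact hnot _ h' _ (by push_cast; ring)
end

section
/- Let p be a prime, K a finite extension of ℚ_p, and f(x) = x³ + ax² + bx + c a monic cubic polynomial irreducible over K. Fix an algebraic closure of K, let α be a root of f in it, set E = K(α), let d ∈ K* be a non-square, set L = K(√d), and let LE be the compositum of L and E. Then for every x ∈ K: x − α ∈ N_{LE/E}((LE)*) if and only if f(x) ∈ N_{L/K}(L*). In particular, for every x ∈ K with f(x) ∈ N_{L/K}(L*), the element x − α is a norm from LE to E. -/
open Module Polynomial

/-- The subgroup of squares of a commutative group. -/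
abbrev squareSubgroup (G : Type*) [CommGroup G] : Subgroup G := (powMonoidHom 2 : G →* G).range

/-- The norm of a field extension as a homomorphism of unit groups. -/
noncomputable abbrev unitsNorm (F M : Type*) [Field F] [Field M] [Algebra F M] : Mˣ →* Fˣ :=
  Units.map (Algebra.norm F : M →* F)

section Quadratic

variable {F M : Type*} [Field F] [Field M] [Algebra F M]

theorem linearIndependent_one_sqrt {d : F} (hd : ¬ IsSquare d) {s : M}
    (hs : s ^ 2 = algebraMap F M d) : LinearIndependent F ![1, s] := by
  rw [LinearIndependent.pair_iff' one_ne_zero]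
  intro a ha
  apply hd
  refine ⟨a, (algebraMap F M).injective ?_⟩
  rw [← hs, ← ha, Algebra.smul_def]
  simp [pow_two]

/-- The basis `1, √d` of a quadratic extension containing `√d`. -/
noncomputable def sqrtBasis (h2 : finrank F M = 2) {d : F} (hd : ¬ IsSquare d) {s : M}
    (hs : s ^ 2 = algebraMap F M d) : Basis (Fin 2) F M :=
  basisOfLinearIndependentOfCardEqFinrank (linearIndependent_one_sqrt hd hs) (by simp [h2])

theorem exists_eq_add_mul_sqrt (h2 : finrank F M = 2) {d : F} (hd : ¬ IsSquare d) {s : M}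
    (hs : s ^ 2 = algebraMap F M d) (y : M) :
    ∃ u v : F, y = algebraMap F M u + algebraMap F M v * s := by
  refine ⟨(sqrtBasis h2 hd hs).repr y 0, (sqrtBasis h2 hd hs).repr y 1, ?_⟩
  conv_lhs => rw [← (sqrtBasis h2 hd hs).sum_repr y]
  simp [sqrtBasis, Algebra.smul_def]

theorem norm_add_mul_sqrt (h2 : finrank F M = 2) {d : F} (hd : ¬ IsSquare d) {s : M}
    (hs : s ^ 2 = algebraMap F M d) (u v : F) :
    Algebra.norm F (algebraMap F M u + algebraMap F M v * s) = u ^ 2 - d * v ^ 2 := by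
  have hb0 : sqrtBasis h2 hd hs 0 = 1 := by simp [sqrtBasis]
  have hb1 : sqrtBasis h2 hd hs 1 = s := by simp [sqrtBasis]
  have h0 : (algebraMap F M u + algebraMap F M v * s) * sqrtBasis h2 hd hs 0 =
      u • sqrtBasis h2 hd hs 0 + v • sqrtBasis h2 hd hs 1 := by
    simp [hb0, hb1, Algebra.smul_def]
  have h1 : (algebraMap F M u + algebraMap F M v * s) * sqrtBasis h2 hd hs 1 =
      (d * v) • sqrtBasis h2 hd hs 0 + u • sqrtBasis h2 hd hs 1 := by
    rw [hb0, hb1, Algebra.smul_def, Algebra.smul_def, map_mul, ← hs]; ring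
  rw [Algebra.norm_eq_matrix_det (sqrtBasis h2 hd hs), Matrix.det_fin_two]
  simp only [Algebra.leftMulMatrix_eq_repr_mul, h0, h1]
  simp
  ring

theorem norm_algebraMap_of_quadratic (h2 : finrank F M = 2) (x : F) :
    Algebra.norm F (algebraMap F M x) = x ^ 2 := by
  rw [Algebra.norm_algebraMap, h2]

theorem squareSubgroup_relIndex_comap (h2 : finrank F M = 2) (hF : (2 : F) ≠ 0) {d : F}
    (hd0 : d ≠ 0) (hd : ¬ IsSquare d) {s : M} (hs : s ^ 2 = algebraMap F M d) :
    (squareSubgroup Fˣ).relIndex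
      ((squareSubgroup Mˣ).comap (Units.map (algebraMap F M : F →* M))) = 2 := by
  have hs0 : s ≠ 0 := by
    rintro rfl
    exact hd0 ((algebraMap F M).injective (by simpa using hs.symm))
  rw [Subgroup.relIndex_eq_two_iff_exists_notMem_and]
  refine ⟨Units.mk0 d hd0, ⟨Units.mk0 s hs0, ?_⟩, ?_, ?_⟩
  · ext; simpa using hs
  · rintro ⟨x, hx⟩
    exact hd ⟨x, by simpa [pow_two] using congrArg Units.val hx.symm⟩
  · rintro b ⟨y, hy⟩
    obtain ⟨u, v, huv⟩ := exists_eq_add_mul_sqrt h2 hd hs (y : M)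
    have hy' : (y : M) ^ 2 = algebraMap F M b := by simpa using congrArg Units.val hy
    have hsq : (u ^ 2 + d * v ^ 2 - b) • (1 : M) + (2 * u * v) • s = 0 := by
      simp only [Algebra.smul_def, map_sub, map_add, map_mul, map_pow, ← hy', huv, ← hs, map_ofNat]
      ring
    have hlin := linearIndependent_one_sqrt hd hs
    rw [LinearIndependent.pair_iff] at hlin
    have hli := hlin _ _ hsq
    have huv0 : u = 0 ∨ v = 0 := by simpa [hF] using hli.2
    have hb := sub_eq_zero.1 hli.1
    have hbne := b.ne_zero
    rcases huv0 with rfl | rfl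
    · left
      have hv : v ≠ 0 := by rintro rfl; simp at hb; exact hbne hb.symm
      refine ⟨Units.mk0 (d * v) (mul_ne_zero hd0 hv), ?_⟩
      ext
      simp [← hb]; ring
    · right
      have hu : u ≠ 0 := by rintro rfl; simp at hb; exact hbne hb.symm
      exact ⟨Units.mk0 u hu, by ext; simp [← hb]⟩

theorem range_sup_ker_unitsNorm (h2 : finrank F M = 2) (hF : (2 : F) ≠ 0) {d : F}
    (hd0 : d ≠ 0) (hd : ¬ IsSquare d) {s : M} (hs : s ^ 2 = algebraMap F M d) :
    (Units.map (algebraMap F M : F →* M)).range ⊔ (unitsNorm F M).ker =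
      squareSubgroup Mˣ ⊔ (Units.map (algebraMap F M : F →* M)).range := by
  apply le_antisymm
  · refine sup_le le_sup_right fun y hy => ?_
    obtain ⟨u, v, huv⟩ := exists_eq_add_mul_sqrt h2 hd hs (y : M)
    have hN : Algebra.norm F (y : M) = 1 := by
      simpa using congrArg Units.val (MonoidHom.mem_ker.1 hy)
    rw [huv, norm_add_mul_sqrt h2 hd hs] at hN
    by_cases hu : 1 + u = 0
    · have hu' : u = -1 := by linear_combination hu
      have hv : v = 0 := by
        have : d * v ^ 2 = 0 := by rw [hu'] at hN; linear_combination -hN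
        simpa [hd0] using this
      refine Subgroup.mem_sup_right ⟨-1, ?_⟩
      ext
      simp [huv, hu', hv]
    · have h2u : 2 * (1 + u) ≠ 0 := mul_ne_zero hF hu
      have hN' : algebraMap F M u ^ 2 - s ^ 2 * algebraMap F M v ^ 2 = 1 := by
        rw [hs, ← map_pow, ← map_pow, ← map_mul, ← map_sub, hN, map_one]
      have key : (1 + (y : M)) ^ 2 = y * algebraMap F M (2 * (1 + u)) := by
        simp only [map_mul, map_add, map_one, map_ofNat, huv]
        linear_combination -hN'
      have hy1 : 1 + (y : M) ≠ 0 := by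
        intro h
        rw [h] at key
        have := mul_ne_zero y.ne_zero ((map_ne_zero (algebraMap F M)).2 h2u)
        exact this (by rw [← key]; simp)
      refine Subgroup.mem_sup.2 ⟨Units.mk0 _ hy1 ^ 2, ⟨_, rfl⟩,
        (Units.map (algebraMap F M : F →* M) (Units.mk0 _ h2u))⁻¹, inv_mem ⟨_, rfl⟩, ?_⟩
      rw [mul_inv_eq_iff_eq_mul]
      ext
      simpa using key
  · refine sup_le ?_ le_sup_left
    rintro _ ⟨y, rfl⟩
    refine Subgroup.mem_sup.2 ⟨Units.map (algebraMap F M : F →* M) (unitsNorm F M y), ⟨_, rfl⟩,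
      (Units.map (algebraMap F M : F →* M) (unitsNorm F M y))⁻¹ * y ^ 2, ?_, by simp⟩
    rw [MonoidHom.mem_ker]
    ext
    have hy : Algebra.norm F (y : M) ≠ 0 := (unitsNorm F M y).ne_zero
    simp [norm_algebraMap_of_quadratic h2, hy]

/-- The index of the norm group of a quadratic extension in terms of numbers of square classes. -/
theorem two_mul_index_squareSubgroup_mul_index_unitsNorm (h2 : finrank F M = 2) (hF : (2 : F) ≠ 0)
    {d : F} (hd0 : d ≠ 0) (hd : ¬ IsSquare d) (hsM : ∃ s : M, s ^ 2 = algebraMap F M d) :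
    2 * (squareSubgroup Mˣ).index * (unitsNorm F M).range.index =
      (squareSubgroup Fˣ).index ^ 2 := by
  obtain ⟨s, hs⟩ := hsM
  set ι := Units.map (algebraMap F M : F →* M) with hι
  have hmap : ι.range.map (unitsNorm F M) = squareSubgroup Fˣ := by
    rw [MonoidHom.map_range]
    congr 1
    ext x
    simp [hι, norm_algebraMap_of_quadratic h2]
  have h1 := Subgroup.index_map ι.range (unitsNorm F M)
  rw [hmap, range_sup_ker_unitsNorm h2 hF hd0 hd hs] at h1
  have h3 := Subgroup.relIndex_mul_index
    (le_sup_left : squareSubgroup Mˣ ≤ squareSubgroup Mˣ ⊔ ι.range)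
  rw [Subgroup.relIndex_sup_left, ← Subgroup.index_comap] at h3
  have hle : squareSubgroup Fˣ ≤ (squareSubgroup Mˣ).comap ι := by
    rintro _ ⟨x, rfl⟩
    exact ⟨ι x, by simp⟩
  have h4 := Subgroup.relIndex_mul_index hle
  rw [squareSubgroup_relIndex_comap h2 hF hd0 hd hs] at h4
  rw [← h3, mul_assoc, mul_assoc, ← h1, ← mul_assoc, h4, pow_two]

end Quadratic

section SquareIndex

variable {G A : Type*} [CommGroup G] [CommGroup A]

/-- The number of square classes of a group with a square-torsion-free subgroup of finite index. -/
theorem index_squareSubgroup_of_injective (φ : A →* G) (hφ : Function.Injective φ)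
    [φ.range.FiniteIndex] (hA : Function.Injective (fun a : A => a ^ 2)) :
    (squareSubgroup G).index =
      Nat.card (powMonoidHom 2 : G →* G).ker * (squareSubgroup A).index := by
  have h1 := Subgroup.index_map φ.range (powMonoidHom 2 : G →* G)
  have hcomm : φ.range.map (powMonoidHom 2 : G →* G) = (squareSubgroup A).map φ := by
    rw [MonoidHom.map_range, MonoidHom.map_range]
    congr 1
    ext x
    simp
  rw [hcomm, Subgroup.index_map_of_injective _ hφ] at h1
  have h2 := Subgroup.relIndex_mul_index
    (le_sup_left : φ.range ≤ φ.range ⊔ (powMonoidHom 2 : G →* G).ker)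
  have hdisj : φ.range ⊓ (powMonoidHom 2 : G →* G).ker = ⊥ := by
    rw [eq_bot_iff]
    rintro _ ⟨⟨a, rfl⟩, ha⟩
    have : a ^ 2 = 1 := hφ (by simpa [MonoidHom.mem_ker] using ha)
    have ha1 : a = 1 := hA (by simpa using this)
    simp [ha1]
  rw [Subgroup.relIndex_sup_left, ← Subgroup.inf_relIndex_right, hdisj,
    Subgroup.relIndex_bot_left] at h2
  have h0 : (φ.range ⊔ (powMonoidHom 2 : G →* G).ker).index ≠ 0 := by
    intro h
    rw [h, mul_zero] at h2
    exact Subgroup.FiniteIndex.index_ne_zero h2.symm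
  rw [← h2] at h1
  apply Nat.eq_of_mul_eq_mul_left (Nat.pos_of_ne_zero h0)
  linarith

theorem index_squareSubgroup_prod :
    (squareSubgroup (G × A)).index = (squareSubgroup G).index * (squareSubgroup A).index := by
  rw [← Subgroup.index_prod]
  congr 1
  ext ⟨g, a⟩
  simp [Subgroup.mem_prod, MonoidHom.mem_range]

theorem index_squareSubgroup_multiplicative_int :
    (squareSubgroup (Multiplicative ℤ)).index = 2 := by
  rw [Subgroup.index_eq_two_iff_exists_notMem_and]
  refine ⟨Multiplicative.ofAdd 1, ?_, fun b => ?_⟩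
  · rintro ⟨x, hx⟩
    have := congrArg Multiplicative.toAdd hx
    simp at this
    omega
  · rcases Int.even_or_odd' b.toAdd with ⟨k, hk | hk⟩
    · exact Or.inr ⟨Multiplicative.ofAdd k, Multiplicative.toAdd.injective (by simp [hk])⟩
    · exact Or.inl ⟨Multiplicative.ofAdd (k + 1),
        Multiplicative.toAdd.injective (by simp [hk]; ring)⟩

theorem card_ker_powMonoidHom_two_units (F : Type*) [Field F] (hF : (2 : F) ≠ 0) :
    Nat.card (powMonoidHom 2 : Fˣ →* Fˣ).ker = 2 := by
  have hset : ((powMonoidHom 2 : Fˣ →* Fˣ).ker : Set Fˣ) = {1, -1} := by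
    ext x
    rw [SetLike.mem_coe, MonoidHom.mem_ker, powMonoidHom_apply, Units.ext_iff,
      Units.val_pow_eq_pow_val, Units.val_one, sq_eq_one_iff]
    simp only [Set.mem_insert_iff, Set.mem_singleton_iff, Units.ext_iff, Units.val_one,
      Units.val_neg]
  have hne : (1 : Fˣ) ≠ -1 := by
    intro h
    apply hF
    have := congrArg Units.val h
    simp only [Units.val_one, Units.val_neg] at this
    linear_combination this
  rw [← SetLike.coe_sort_coe, hset, Nat.card_coe_set_eq, Set.ncard_pair hne]

end SquareIndex

section UnitBall

/-- The closed unit ball of an ultrametric field, as an additive group. -/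
def unitBall (F : Type*) [NormedField F] [IsUltrametricDist F] : AddSubgroup F where
  carrier := {x | ‖x‖ ≤ 1}
  zero_mem' := by simp
  add_mem' {x y} hx hy := (IsUltrametricDist.norm_add_le_max x y).trans (max_le hx hy)
  neg_mem' {x} hx := by simpa using hx

theorem mem_unitBall {F : Type*} [NormedField F] [IsUltrametricDist F] {x : F} :
    x ∈ unitBall F ↔ ‖x‖ ≤ 1 := Iff.rfl

/-- The index of the subgroup of `N`-multiples in an additive commutative group. -/
noncomputable def multiplesIndex (A : Type*) [AddCommGroup A] (N : ℕ) : ℕ :=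
  (nsmulAddMonoidHom N : A →+ A).range.index

theorem multiplesIndex_congr {A B : Type*} [AddCommGroup A] [AddCommGroup B] (e : A ≃+ B) (N : ℕ) :
    multiplesIndex A N = multiplesIndex B N := by
  rw [multiplesIndex, multiplesIndex, ← AddSubgroup.index_map_equiv _ e]
  congr 1
  ext b
  constructor
  · rintro ⟨_, ⟨a, rfl⟩, rfl⟩
    exact ⟨e a, by simp⟩
  · rintro ⟨b, rfl⟩
    exact ⟨_, ⟨e.symm b, rfl⟩, by simp⟩

theorem multiplesIndex_pi (A : Type*) [AddCommGroup A] (ι : Type*) [Fintype ι] (N : ℕ) :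
    multiplesIndex (ι → A) N = multiplesIndex A N ^ Fintype.card ι := by
  rw [multiplesIndex, multiplesIndex, ← Finset.card_univ, ← Finset.prod_const,
    ← AddSubgroup.index_pi]
  congr 1
  ext x
  simp only [AddMonoidHom.mem_range, AddSubgroup.mem_pi, Set.mem_univ, forall_const]
  constructor
  · rintro ⟨y, rfl⟩ i
    exact ⟨y i, rfl⟩
  · intro h
    choose y hy using h
    exact ⟨y, funext hy⟩

theorem multiplesIndex_padicInt_ne_zero (p : ℕ) [Fact p.Prime] {N : ℕ} (hN : N ≠ 0) :
    multiplesIndex ℤ_[p] N ≠ 0 := by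
  have hN0 : (N : ℤ_[p]) ≠ 0 := by exact_mod_cast hN
  have hopen : IsOpen ((nsmulAddMonoidHom N : ℤ_[p] →+ ℤ_[p]).range : Set ℤ_[p]) := by
    apply AddSubgroup.isOpen_of_mem_nhds (g := 0)
    filter_upwards [Metric.ball_mem_nhds (0 : ℤ_[p]) (norm_pos_iff.2 hN0)] with x hx
    have hdvd : (N : ℤ_[p]) ∣ x := by
      have hx' : ‖x‖ ≤ ‖(N : ℤ_[p])‖ := by simpa using (mem_ball_zero_iff.1 hx).le
      have hNQ : ((N : ℤ_[p]) : ℚ_[p]) ≠ 0 := fun h => hN0 (Subtype.ext h)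
      refine ⟨⟨x / (N : ℤ_[p]), ?_⟩, ?_⟩
      · rw [norm_div]
        exact div_le_one_of_le₀ hx' (norm_nonneg _)
      · apply Subtype.ext
        change (x : ℚ_[p]) = ((N : ℤ_[p]) : ℚ_[p]) * (x / (N : ℤ_[p]))
        field_simp
    obtain ⟨y, rfl⟩ := hdvd
    exact ⟨y, by simp⟩
  have := AddSubgroup.quotient_finite_of_isOpen _ hopen
  exact AddSubgroup.index_ne_zero_of_finite

variable (p : ℕ) [Fact p.Prime] {F : Type*} [NormedField F] [NormedAlgebra ℚ_[p] F]
  [FiniteDimensional ℚ_[p] F]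

theorem isIntegral_padicInt_iff_norm_le_one [Algebra ℤ_[p] F] [IsScalarTower ℤ_[p] ℚ_[p] F]
    (x : F) : IsIntegral ℤ_[p] x ↔ ‖x‖ ≤ 1 := by
  have hx : IsIntegral ℚ_[p] x := Algebra.IsIntegral.isIntegral x
  rw [NormedAlgebra.norm_eq_spectralNorm ℚ_[p] x, spectralNorm,
    spectralValue_le_one_iff (minpoly.monic hx)]
  constructor
  · intro h n
    rw [minpoly.isIntegrallyClosed_eq_field_fractions' ℚ_[p] h, coeff_map]
    exact PadicInt.norm_le_one _
  · intro h
    have hl : minpoly ℚ_[p] x ∈ lifts (algebraMap ℤ_[p] ℚ_[p]) := by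
      rw [lifts_iff_coeff_lifts]
      exact fun n => ⟨⟨_, h n⟩, rfl⟩
    obtain ⟨q, hq, -, hm⟩ := lifts_and_natDegree_eq_and_monic hl (minpoly.monic hx)
    refine ⟨q, hm, ?_⟩
    rw [IsScalarTower.algebraMap_eq ℤ_[p] ℚ_[p] F, ← eval₂_map, hq]
    exact minpoly.aeval _ _

theorem multiplesIndex_unitBall [IsUltrametricDist F] (N : ℕ) :
    multiplesIndex (unitBall F) N = multiplesIndex ℤ_[p] N ^ finrank ℚ_[p] F := by
  let : Algebra ℤ_[p] F := ((algebraMap ℚ_[p] F).comp (algebraMap ℤ_[p] ℚ_[p])).toAlgebra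
  have : IsScalarTower ℤ_[p] ℚ_[p] F := IsScalarTower.of_algebraMap_eq fun _ => rfl
  have : IsTorsionFree ℤ_[p] F := IsTorsionFree.trans_faithfulSMul ℤ_[p] ℚ_[p] F
  have := IsIntegralClosure.module_free ℤ_[p] ℚ_[p] F (integralClosure ℤ_[p] F)
  have := IsIntegralClosure.finite ℤ_[p] ℚ_[p] F (integralClosure ℤ_[p] F)
  let e : unitBall F ≃+ integralClosure ℤ_[p] F :=
    { toFun := fun x => ⟨x, (isIntegral_padicInt_iff_norm_le_one p _).2 x.2⟩
      invFun := fun x => ⟨x, (isIntegral_padicInt_iff_norm_le_one p _).1 x.2⟩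
      left_inv := fun _ => rfl
      right_inv := fun _ => rfl
      map_add' := fun _ _ => rfl }
  rw [multiplesIndex_congr (e.trans
    (Module.finBasis ℤ_[p] (integralClosure ℤ_[p] F)).equivFun.toAddEquiv), multiplesIndex_pi,
    Fintype.card_fin, IsIntegralClosure.rank ℤ_[p] ℚ_[p] F (integralClosure ℤ_[p] F)]

end UnitBall

section PrincipalUnits

variable {F : Type*} [NormedField F] [IsUltrametricDist F]

theorem norm_eq_one_of_norm_sub_one_lt_one {x : F} (hx : ‖x - 1‖ < 1) : ‖x‖ = 1 := by
  have h := IsUltrametricDist.norm_eq_of_add_norm_lt_max (x := x) (y := -1) (by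
    rw [← sub_eq_add_neg, norm_neg, norm_one]
    exact hx.trans_le (le_max_right _ _))
  simpa using h

/-- The group of units at distance at most `r < 1` from `1`. -/
def principalUnits (F : Type*) [NormedField F] [IsUltrametricDist F] {r : ℝ} (hr0 : 0 ≤ r)
    (hr1 : r < 1) : Subgroup Fˣ where
  carrier := {u | ‖(u : F) - 1‖ ≤ r}
  one_mem' := by simpa using hr0
  mul_mem' {u v} hu hv := by
    have hu1 := norm_eq_one_of_norm_sub_one_lt_one (lt_of_le_of_lt hu hr1)
    have h : ((u * v : Fˣ) : F) - 1 = u * (v - 1) + (u - 1) := by push_cast; ring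
    change ‖((u * v : Fˣ) : F) - 1‖ ≤ r
    rw [h]
    refine (IsUltrametricDist.norm_add_le_max _ _).trans (max_le ?_ hu)
    rw [norm_mul, hu1, one_mul]
    exact hv
  inv_mem' {u} hu := by
    have hu1 := norm_eq_one_of_norm_sub_one_lt_one (lt_of_le_of_lt hu hr1)
    have h : ((u⁻¹ : Fˣ) : F) - 1 = -((u⁻¹ : Fˣ) * (u - 1) : F) := by
      rw [mul_sub, Units.inv_mul]; ring
    change ‖((u⁻¹ : Fˣ) : F) - 1‖ ≤ r
    rw [h, norm_neg, norm_mul, Units.val_inv_eq_inv_val, norm_inv, hu1, inv_one, one_mul]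
    exact hu

theorem mem_principalUnits {r : ℝ} {hr0 : 0 ≤ r} {hr1 : r < 1} {u : Fˣ} :
    u ∈ principalUnits F hr0 hr1 ↔ ‖(u : F) - 1‖ ≤ r := Iff.rfl

/-- Solving `y + c y² = b` in the unit ball, for `‖c‖ < 1`. -/
theorem exists_add_mul_sq_eq [CompleteSpace F] {b c : F} (hb : ‖b‖ ≤ 1) (hc : ‖c‖ < 1) :
    ∃ y : F, ‖y‖ ≤ 1 ∧ y + c * y ^ 2 = b := by
  let g : F → F := fun y => b - c * y ^ 2
  have hmaps : Set.MapsTo g (Metric.closedBall 0 1) (Metric.closedBall 0 1) := by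
    intro y hy
    rw [mem_closedBall_zero_iff] at hy ⊢
    change ‖b - c * y ^ 2‖ ≤ 1
    rw [sub_eq_add_neg]
    refine (IsUltrametricDist.norm_add_le_max _ _).trans (max_le hb ?_)
    rw [norm_neg, norm_mul, norm_pow]
    exact mul_le_one₀ hc.le (by positivity) (pow_le_one₀ (norm_nonneg _) hy)
  have hcontr : ContractingWith ‖c‖₊ (hmaps.restrict g _ _) := by
    refine ⟨by exact_mod_cast hc, LipschitzWith.of_dist_le_mul ?_⟩
    rintro ⟨y, hy⟩ ⟨z, hz⟩
    rw [mem_closedBall_zero_iff] at hy hz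
    change dist (b - c * y ^ 2) (b - c * z ^ 2) ≤ ‖c‖ * dist y z
    rw [dist_eq_norm, dist_eq_norm]
    have h : b - c * y ^ 2 - (b - c * z ^ 2) = -(c * (y - z) * (y + z)) := by ring
    rw [h, norm_neg, norm_mul, norm_mul]
    exact mul_le_of_le_one_right (by positivity)
      ((IsUltrametricDist.norm_add_le_max _ _).trans (max_le hy hz))
  obtain ⟨y, hy, hfix, -⟩ := hcontr.exists_fixedPoint' Metric.isClosed_closedBall.isComplete
    hmaps (x := 0) (by simp) (edist_ne_top _ _)
  refine ⟨y, mem_closedBall_zero_iff.1 hy, ?_⟩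
  have : b - c * y ^ 2 = y := hfix
  linear_combination -this

variable {t : F}

/-- The leading coefficient `(u - 1) / t` of a principal unit `u`, modulo `2`. -/
noncomputable def leadingCoeffModTwo (ht0 : t ≠ 0) (ht1 : ‖t‖ < 1) (ht2 : ‖t‖ < ‖(2 : F)‖) :
    principalUnits F (norm_nonneg t) ht1 →* Multiplicative
      (unitBall F ⧸ (nsmulAddMonoidHom 2 : unitBall F →+ unitBall F).range) :=
  MonoidHom.mk' (fun u => Multiplicative.ofAdd (QuotientAddGroup.mk ⟨((u : Fˣ) - 1 : F) / t, by
      rw [mem_unitBall, norm_div]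
      exact div_le_one_of_le₀ u.2 (norm_nonneg _)⟩)) (by
    intro u v
    rw [← ofAdd_add, ← QuotientAddGroup.mk_add]
    congr 1
    symm
    rw [QuotientAddGroup.eq]
    have h2 : (2 : F) ≠ 0 := norm_pos_iff.1 ((norm_nonneg t).trans_lt ht2)
    refine ⟨⟨((u : Fˣ) - 1 : F) * ((v : Fˣ) - 1 : F) / t / 2, ?_⟩, ?_⟩
    · rw [mem_unitBall, norm_div, norm_div, norm_mul]
      refine div_le_one_of_le₀ ?_ (norm_nonneg _)
      refine le_trans ?_ ht2.le
      rw [div_le_iff₀ (norm_pos_iff.2 ht0)]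
      exact mul_le_mul u.2 v.2 (norm_nonneg _) (norm_nonneg _)
    · apply Subtype.ext
      simp
      field_simp
      ring)

theorem leadingCoeffModTwo_surjective (ht0 : t ≠ 0) (ht1 : ‖t‖ < 1) (ht2 : ‖t‖ < ‖(2 : F)‖) :
    Function.Surjective (leadingCoeffModTwo ht0 ht1 ht2) := by
  intro q
  obtain ⟨⟨x, hx⟩, hq⟩ := QuotientAddGroup.mk_surjective q.toAdd
  rw [mem_unitBall] at hx
  have hle : ‖(1 + t * x) - 1‖ ≤ ‖t‖ := by
    rw [add_sub_cancel_left, norm_mul]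
    exact mul_le_of_le_one_right (norm_nonneg _) hx
  have hne : 1 + t * x ≠ 0 := by
    rw [← norm_pos_iff, norm_eq_one_of_norm_sub_one_lt_one (hle.trans_lt ht1)]
    exact one_pos
  refine ⟨⟨Units.mk0 _ hne, hle⟩, ?_⟩
  apply Multiplicative.toAdd.injective
  rw [← hq]
  change QuotientAddGroup.mk _ = QuotientAddGroup.mk _
  congr 1
  apply Subtype.ext
  change (1 + t * x - 1) / t = x
  field_simp
  ring

theorem leadingCoeffModTwo_ker [CompleteSpace F] (ht0 : t ≠ 0) (ht1 : ‖t‖ < 1)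
    (ht2 : ‖t‖ < ‖(2 : F)‖) :
    (leadingCoeffModTwo ht0 ht1 ht2).ker = squareSubgroup (principalUnits F (norm_nonneg t) ht1) := by
  have h2 : (2 : F) ≠ 0 := norm_pos_iff.1 ((norm_nonneg t).trans_lt ht2)
  apply le_antisymm
  · intro u hu
    have hu' : (QuotientAddGroup.mk _ : unitBall F ⧸ _) = 0 :=
      congrArg Multiplicative.toAdd (MonoidHom.mem_ker.1 hu)
    rw [QuotientAddGroup.eq_zero_iff] at hu'
    obtain ⟨⟨b, hb⟩, hbu⟩ := hu'
    have hbu' : 2 * b = ((u : Fˣ) - 1 : F) / t := by simpa using congrArg Subtype.val hbu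
    rw [eq_div_iff ht0] at hbu'
    obtain ⟨y, hy, hyb⟩ := exists_add_mul_sq_eq (b := b) (c := t / 2) hb (by
      rw [norm_div, div_lt_one (norm_pos_iff.2 h2)]
      exact ht2)
    have hle : ‖(1 + t * y) - 1‖ ≤ ‖t‖ := by
      rw [add_sub_cancel_left, norm_mul]
      exact mul_le_of_le_one_right (norm_nonneg _) hy
    have hne : 1 + t * y ≠ 0 := by
      rw [← norm_pos_iff, norm_eq_one_of_norm_sub_one_lt_one (hle.trans_lt ht1)]
      exact one_pos
    refine ⟨⟨Units.mk0 _ hne, hle⟩, ?_⟩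
    apply Subtype.ext
    apply Units.ext
    change (1 + t * y) ^ 2 = ((u : Fˣ) : F)
    have hyb' : 2 * y + t * y ^ 2 = 2 * b := by rw [← hyb]; field_simp
    linear_combination t * hyb' + hbu'
  · rintro _ ⟨u, rfl⟩
    rw [MonoidHom.mem_ker, powMonoidHom_apply, map_pow]
    obtain ⟨x, hx⟩ := QuotientAddGroup.mk_surjective (leadingCoeffModTwo ht0 ht1 ht2 u).toAdd
    apply Multiplicative.toAdd.injective
    rw [toAdd_pow, ← hx, ← QuotientAddGroup.mk_nsmul, toAdd_one, QuotientAddGroup.eq_zero_iff]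
    exact ⟨x, rfl⟩

theorem index_squareSubgroup_principalUnits [CompleteSpace F] (ht0 : t ≠ 0) (ht1 : ‖t‖ < 1)
    (ht2 : ‖t‖ < ‖(2 : F)‖) :
    (squareSubgroup (principalUnits F (norm_nonneg t) ht1)).index =
      multiplesIndex (unitBall F) 2 := by
  rw [← leadingCoeffModTwo_ker ht0 ht1 ht2, Subgroup.index_ker,
    MonoidHom.range_eq_top.2 (leadingCoeffModTwo_surjective ht0 ht1 ht2), multiplesIndex,
    AddSubgroup.index, Subgroup.card_top]
  rfl

/-- The homomorphism `(k, v) ↦ ϖ ^ k * v` for principal units `v`. -/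
noncomputable def zpowMulPrincipalUnit (ϖ : Fˣ) {r : ℝ} (hr0 : 0 ≤ r) (hr1 : r < 1) :
    Multiplicative ℤ × principalUnits F hr0 hr1 →* Fˣ :=
  (zpowersHom Fˣ ϖ).coprod (principalUnits F hr0 hr1).subtype

theorem zpowMulPrincipalUnit_apply (ϖ : Fˣ) {r : ℝ} (hr0 : 0 ≤ r) (hr1 : r < 1) (k : ℤ)
    (v : principalUnits F hr0 hr1) :
    zpowMulPrincipalUnit ϖ hr0 hr1 (Multiplicative.ofAdd k, v) = ϖ ^ k * v := by
  simp [zpowMulPrincipalUnit]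

theorem zpowMulPrincipalUnit_injective {ϖ : Fˣ} (hϖ : ‖(ϖ : F)‖ < 1) {r : ℝ} (hr0 : 0 ≤ r)
    (hr1 : r < 1) : Function.Injective (zpowMulPrincipalUnit ϖ hr0 hr1) := by
  rw [injective_iff_map_eq_one]
  rintro ⟨k, v⟩ h
  obtain ⟨k, rfl⟩ := Multiplicative.ofAdd.surjective k
  rw [zpowMulPrincipalUnit_apply] at h
  have hv := norm_eq_one_of_norm_sub_one_lt_one (lt_of_le_of_lt v.2 hr1)
  have hn : ‖(ϖ : F)‖ ^ k = 1 := by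
    have := congrArg (fun u : Fˣ => ‖(u : F)‖) h
    simpa [hv] using this
  have hk : k = 0 := (zpow_eq_one_iff_right₀ (norm_nonneg _) hϖ.ne).1 hn
  subst hk
  have : v = 1 := Subtype.ext (by simpa using h)
  rw [this]
  rfl

theorem zpowMulPrincipalUnit_range_finiteIndex {ϖ : Fˣ} (hϖ : ‖(ϖ : F)‖ < 1) {r : ℝ}
    (hr0 : 0 ≤ r) (hr1 : r < 1) {N : ℕ} (hN : ‖(N : F)‖ ≤ r * ‖(ϖ : F)‖)
    (hfin : multiplesIndex (unitBall F) N ≠ 0) :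
    (zpowMulPrincipalUnit ϖ hr0 hr1).range.FiniteIndex := by
  have hϖ0 : 0 < ‖(ϖ : F)‖ := norm_pos_iff.2 ϖ.ne_zero
  have hscale : ∀ g : Fˣ, ∃ k : ℤ, ‖((ϖ ^ k * g : Fˣ) : F)‖ ∈ Set.Ioc ‖(ϖ : F)‖ 1 := by
    intro g
    obtain ⟨n, hn1, hn2⟩ := exists_mem_Ioc_zpow (norm_pos_iff.2 g.ne_zero)
      ((one_lt_inv₀ hϖ0).2 hϖ)
    refine ⟨n + 1, ?_, ?_⟩
    · push_cast
      rw [norm_mul, norm_zpow, zpow_add_one₀ hϖ0.ne']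
      rw [inv_zpow, inv_lt_iff_one_lt_mul₀ (zpow_pos hϖ0 n)] at hn1
      nlinarith
    · push_cast
      rw [norm_mul, norm_zpow]
      rwa [inv_zpow, ← one_div, le_div_iff₀' (zpow_pos hϖ0 _)] at hn2
  choose k hk using hscale
  let ρ : Fˣ → unitBall F ⧸ (nsmulAddMonoidHom N : unitBall F →+ unitBall F).range :=
    fun g => QuotientAddGroup.mk ⟨_, (hk g).2⟩
  have hρ : ∀ g h : Fˣ, ρ g = ρ h → g⁻¹ * h ∈ (zpowMulPrincipalUnit ϖ hr0 hr1).range := by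
    intro g h hgh
    obtain ⟨⟨b, hb⟩, hbe⟩ := QuotientAddGroup.eq.1 hgh
    have hbe' : (N : F) * b = -((ϖ ^ k g * g : Fˣ) : F) + ((ϖ ^ k h * h : Fˣ) : F) := by
      simpa using congrArg Subtype.val hbe
    set g' := ϖ ^ k g * g with hg'
    set h' := ϖ ^ k h * h with hh'
    have hmem : g'⁻¹ * h' ∈ principalUnits F hr0 hr1 := by
      have heq : ((g'⁻¹ * h' : Fˣ) : F) - 1 = N * b / g' := by
        rw [hbe', Units.val_mul, Units.val_inv_eq_inv_val]
        field_simp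
        ring
      rw [mem_principalUnits, heq, norm_div, norm_mul,
        div_le_iff₀ (norm_pos_iff.2 g'.ne_zero)]
      calc ‖(N : F)‖ * ‖b‖ ≤ ‖(N : F)‖ := mul_le_of_le_one_right (norm_nonneg _) hb
        _ ≤ r * ‖(ϖ : F)‖ := hN
        _ ≤ r * ‖(g' : F)‖ := mul_le_mul_of_nonneg_left (hk g).1.le hr0
    refine ⟨(Multiplicative.ofAdd (k g - k h), ⟨_, hmem⟩), ?_⟩
    rw [zpowMulPrincipalUnit_apply, zpow_sub]
    change _ * ((ϖ ^ k g * g)⁻¹ * (ϖ ^ k h * h)) = _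
    rw [mul_inv]
    calc _ = (ϖ ^ k g * (ϖ ^ k g)⁻¹) * ((ϖ ^ k h)⁻¹ * ϖ ^ k h) * (g⁻¹ * h) := by
          simp only [mul_comm, mul_assoc, mul_left_comm]
      _ = g⁻¹ * h := by simp
  have : (nsmulAddMonoidHom N : unitBall F →+ unitBall F).range.FiniteIndex := ⟨hfin⟩
  have : Finite (Fˣ ⧸ (zpowMulPrincipalUnit ϖ hr0 hr1).range) :=
    Finite.of_injective (fun q => ρ q.out) fun q q' hqq => by
      have h := hρ _ _ hqq
      rwa [← QuotientGroup.eq, QuotientGroup.out_eq', QuotientGroup.out_eq'] at h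
  exact Subgroup.finiteIndex_of_finite_quotient

end PrincipalUnits

section LocalField

variable (p : ℕ) [Fact p.Prime]

/-- The number of square classes of a `p`-adic field. -/
theorem index_squareSubgroup_units_padic (F : Type*) [Field F] [Algebra ℚ_[p] F]
    [FiniteDimensional ℚ_[p] F] :
    (squareSubgroup Fˣ).index = 4 * multiplesIndex ℤ_[p] 2 ^ finrank ℚ_[p] F := by
  let : NormedField F := spectralNorm.normedField ℚ_[p] F
  let : NormedAlgebra ℚ_[p] F := spectralNorm.normedAlgebra ℚ_[p] F
  have : IsUltrametricDist F :=
    IsUltrametricDist.isUltrametricDist_of_isNonarchimedean_norm isNonarchimedean_spectralNorm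
  have : CompleteSpace F := FiniteDimensional.complete ℚ_[p] F
  have : CharZero F := charZero_of_injective_algebraMap (algebraMap ℚ_[p] F).injective
  have hp0 : p ≠ 0 := (Fact.out : p.Prime).ne_zero
  have hp : ‖(p : F)‖ < 1 := by
    rw [← map_natCast (algebraMap ℚ_[p] F), norm_algebraMap']
    exact Padic.norm_p_lt_one
  have h2le : ‖(2 : F)‖ ≤ 1 := by
    exact_mod_cast IsUltrametricDist.norm_natCast_le_one F 2
  have h2pos : 0 < ‖(2 : F)‖ := norm_pos_iff.2 two_ne_zero
  have hpF : (p : F) ≠ 0 := by exact_mod_cast hp0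
  have ht0 : (4 * p : F) ≠ 0 := mul_ne_zero (by norm_num) hpF
  have h4 : (4 : F) = 2 * 2 := by norm_num
  have ht2 : ‖(4 * p : F)‖ < ‖(2 : F)‖ := by
    rw [h4, norm_mul, norm_mul]
    calc ‖(2 : F)‖ * ‖(2 : F)‖ * ‖(p : F)‖ ≤ ‖(2 : F)‖ * ‖(p : F)‖ := by
          gcongr
          exact mul_le_of_le_one_left h2pos.le h2le
      _ < ‖(2 : F)‖ := mul_lt_of_lt_one_right h2pos hp
  have ht1 : ‖(4 * p : F)‖ < 1 := ht2.trans_le h2le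
  let ϖ : Fˣ := Units.mk0 (p : F) hpF
  have hfin : multiplesIndex (unitBall F) (4 * p * p) ≠ 0 := by
    rw [multiplesIndex_unitBall p]
    exact pow_ne_zero _ (multiplesIndex_padicInt_ne_zero p (by positivity))
  have := zpowMulPrincipalUnit_range_finiteIndex (ϖ := ϖ) hp (norm_nonneg (4 * p : F)) ht1
    (N := 4 * p * p) (by push_cast; rw [norm_mul (4 * p : F)]; exact le_rfl) hfin
  rw [index_squareSubgroup_of_injective _
    (zpowMulPrincipalUnit_injective (ϖ := ϖ) hp (norm_nonneg (4 * p : F)) ht1) ?_,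
    index_squareSubgroup_prod, index_squareSubgroup_multiplicative_int,
    index_squareSubgroup_principalUnits ht0 ht1 ht2, multiplesIndex_unitBall p,
    card_ker_powMonoidHom_two_units F two_ne_zero]
  · ring
  · rintro ⟨k, u⟩ ⟨l, v⟩ h
    obtain ⟨hkl, huv⟩ := Prod.ext_iff.1 h
    have hkl' : k = l := by
      apply Multiplicative.toAdd.injective
      have := congrArg Multiplicative.toAdd hkl
      simpa using this
    have huv' : (((u : Fˣ) : F)) ^ 2 = ((v : Fˣ) : F) ^ 2 := by
      simpa using congrArg (fun w : principalUnits F _ _ => ((w : Fˣ) : F)) huv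
    rcases sq_eq_sq_iff_eq_or_eq_neg.1 huv' with huv' | huv'
    · rw [hkl', Subtype.ext (Units.ext huv')]
    · exfalso
      have hle : ‖(-2 : F)‖ ≤ ‖(4 * p : F)‖ := by
        have hmem := (u * v⁻¹).2
        rw [mem_principalUnits] at hmem
        have heq : (((u * v⁻¹ : principalUnits F (norm_nonneg (4 * p : F)) ht1) : Fˣ) : F) - 1
            = -2 := by
          simp [huv']
          norm_num
        rwa [heq] at hmem
      rw [norm_neg] at hle
      exact hle.not_gt ht2

/-- The norm group of a quadratic extension of a `p`-adic field has index `2`. -/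
theorem index_unitsNorm_of_quadratic {F M : Type*} [Field F] [Algebra ℚ_[p] F]
    [FiniteDimensional ℚ_[p] F] [Field M] [Algebra F M] (h2 : finrank F M = 2) {d : F}
    (hd0 : d ≠ 0) (hd : ¬ IsSquare d) (hsM : ∃ s : M, s ^ 2 = algebraMap F M d) :
    (unitsNorm F M).range.index = 2 := by
  let : Algebra ℚ_[p] M := ((algebraMap F M).comp (algebraMap ℚ_[p] F)).toAlgebra
  have : IsScalarTower ℚ_[p] F M := IsScalarTower.of_algebraMap_eq fun _ => rfl
  have : FiniteDimensional F M := Module.finite_of_finrank_pos (by omega)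
  have : FiniteDimensional ℚ_[p] M := FiniteDimensional.trans ℚ_[p] F M
  have : CharZero F := charZero_of_injective_algebraMap (algebraMap ℚ_[p] F).injective
  have hindex := two_mul_index_squareSubgroup_mul_index_unitsNorm h2 two_ne_zero hd0 hd hsM
  rw [index_squareSubgroup_units_padic p F, index_squareSubgroup_units_padic p M,
    ← Module.finrank_mul_finrank ℚ_[p] F M, h2, pow_mul] at hindex
  have hpos : 0 < (multiplesIndex ℤ_[p] 2 ^ finrank ℚ_[p] F) ^ 2 :=
    Nat.pos_of_ne_zero (pow_ne_zero _ (pow_ne_zero _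
      (multiplesIndex_padicInt_ne_zero p two_ne_zero)))
  apply Nat.eq_of_mul_eq_mul_left hpos
  linarith

end LocalField

section OddDegree

theorem mem_normGroup_iff {F M : Type*} [Field F] [Field M] [Algebra F M] (x : Fˣ) :
    (x : F) ∈ normGroup F M ↔ x ∈ (unitsNorm F M).range := by
  constructor
  · rintro ⟨t, ht, htx⟩
    exact ⟨Units.mk0 t ht, Units.ext htx⟩
  · rintro ⟨t, rfl⟩
    exact ⟨t, t.ne_zero, rfl⟩

variable {K E L LE : Type*} [Field K] [Field E] [Field L] [Field LE] [Algebra K E] [Algebra K L]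
  [Algebra E LE] [Algebra K LE] [IsScalarTower K E LE]

/-- A nonsquare stays a nonsquare in an extension of odd degree. -/
theorem not_isSquare_algebraMap_of_odd_finrank (hE : Odd (finrank K E)) {d : K}
    (hd : ¬ IsSquare d) : ¬ IsSquare (algebraMap K E d) := by
  rintro ⟨y, hy⟩
  have hN := congrArg (Algebra.norm K) hy
  rw [Algebra.norm_algebraMap, map_mul] at hN
  obtain ⟨k, hk⟩ := hE
  have hd0 : d ≠ 0 := by rintro rfl; exact hd (IsSquare.zero)
  apply hd
  refine ⟨Algebra.norm K y / d ^ k, ?_⟩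
  field_simp
  rw [hk] at hN
  linear_combination hN

/-- A `K`-embedding of the quadratic extension `L` into any extension containing `√d`. -/
theorem nonempty_algHom_of_sqrt (hL2 : finrank K L = 2) {d : K} (hd : ¬ IsSquare d)
    (hLd : ∃ s : L, s ^ 2 = algebraMap K L d) (hLEd : ∃ s : LE, s ^ 2 = algebraMap K LE d) :
    Nonempty (L →ₐ[K] LE) := by
  obtain ⟨s, hs⟩ := hLd
  obtain ⟨r, hr⟩ := hLEd
  have : FiniteDimensional K L := Module.finite_of_finrank_pos (by omega)
  have hint : IsIntegral K s := Algebra.IsIntegral.isIntegral s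
  have hmin : minpoly K s = X ^ 2 - C d := by
    symm
    apply minpoly.eq_of_irreducible_of_monic
    · refine X_pow_sub_C_irreducible_of_prime Nat.prime_two fun b hb => hd ⟨b, ?_⟩
      rw [← hb, pow_two]
    · simp [hs]
    · exact monic_X_pow_sub_C d two_ne_zero
  have htop : IntermediateField.adjoin K {s} = ⊤ := by
    rw [Field.primitive_element_iff_minpoly_natDegree_eq, hmin, hL2, natDegree_X_pow_sub_C]
  have halg : Algebra.adjoin K {s} = ⊤ := by
    rw [← IntermediateField.adjoin_simple_toSubalgebra_of_isAlgebraic hint.isAlgebraic, htop,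
      IntermediateField.top_toSubalgebra]
  refine ⟨(PowerBasis.ofAdjoinEqTop hint halg).lift r ?_⟩
  rw [PowerBasis.ofAdjoinEqTop_gen, hmin]
  simp [hr]

/-- The norm from `E` to `K` maps norms from `LE` to norms from `L`. -/
theorem norm_mem_normGroup [FiniteDimensional K E] [FiniteDimensional E LE]
    (hL2 : finrank K L = 2) {d : K}
    (hd : ¬ IsSquare d) (hLd : ∃ s : L, s ^ 2 = algebraMap K L d)
    (hLEd : ∃ s : LE, s ^ 2 = algebraMap K LE d) {x : E} (hx : x ∈ normGroup E LE) :
    Algebra.norm K x ∈ normGroup K L := by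
  obtain ⟨φ⟩ := nonempty_algHom_of_sqrt (LE := LE) hL2 hd hLd hLEd
  obtain ⟨t, ht, rfl⟩ := hx
  let : Algebra L LE := φ.toRingHom.toAlgebra
  have : IsScalarTower K L LE := IsScalarTower.of_algebraMap_eq fun x => (φ.commutes x).symm
  have : FiniteDimensional K LE := FiniteDimensional.trans K E LE
  have : FiniteDimensional L LE := FiniteDimensional.right K L LE
  refine ⟨Algebra.norm L t, (Algebra.norm_ne_zero_iff).2 ht, ?_⟩
  rw [Algebra.norm_norm, Algebra.norm_norm]

/-- Over a `p`-adic field, an element of an odd degree extension `E` is a norm from `E(√d)` if and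
only if its norm to `K` is a norm from `K(√d)`. -/
theorem mem_normGroup_iff_norm_mem_normGroup (p : ℕ) [Fact p.Prime] [Algebra ℚ_[p] K]
    [FiniteDimensional ℚ_[p] K] (hE : Odd (finrank K E)) {d : K} (hd0 : d ≠ 0)
    (hd : ¬ IsSquare d) (hL2 : finrank K L = 2) (hLd : ∃ s : L, s ^ 2 = algebraMap K L d)
    (hLE2 : finrank E LE = 2) (hLEd : ∃ s : LE, s ^ 2 = algebraMap K LE d) (x : E) :
    x ∈ normGroup E LE ↔ Algebra.norm K x ∈ normGroup K L := by
  have : FiniteDimensional K E := Module.finite_of_finrank_pos hE.pos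
  have : FiniteDimensional E LE := Module.finite_of_finrank_pos (by omega)
  refine ⟨norm_mem_normGroup hL2 hd hLd hLEd, fun hx => ?_⟩
  have : FiniteDimensional K L := Module.finite_of_finrank_pos (by omega)
  let : Algebra ℚ_[p] E := ((algebraMap K E).comp (algebraMap ℚ_[p] K)).toAlgebra
  have : IsScalarTower ℚ_[p] K E := IsScalarTower.of_algebraMap_eq fun _ => rfl
  have : FiniteDimensional ℚ_[p] E := FiniteDimensional.trans ℚ_[p] K E
  have hK := index_unitsNorm_of_quadratic p hL2 hd0 hd hLd
  have hEidx := index_unitsNorm_of_quadratic p (M := LE) hLE2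
    ((map_ne_zero (algebraMap K E)).2 hd0) (not_isSquare_algebraMap_of_odd_finrank hE hd)
    (by simpa only [← IsScalarTower.algebraMap_apply] using hLEd)
  have hmap : ∀ y : Eˣ, y ∈ (unitsNorm E LE).range → unitsNorm K E y ∈ (unitsNorm K L).range := by
    intro y hy
    rw [← mem_normGroup_iff] at hy ⊢
    exact norm_mem_normGroup hL2 hd hLd hLEd hy
  obtain ⟨k, hk, -⟩ := Subgroup.index_eq_two_iff_exists_notMem_and.1 hK
  let k' : Eˣ := Units.map (algebraMap K E : K →* E) k
  have hkN : unitsNorm K E k' = k ^ finrank K E := by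
    ext
    simp [k', Algebra.norm_algebraMap]
  have hk2 : k * k ∈ (unitsNorm K L).range := Subgroup.mul_self_mem_of_index_two hK k
  have hkodd : unitsNorm K E k' ∉ (unitsNorm K L).range := by
    obtain ⟨m, hm⟩ := hE
    rw [hkN, hm, pow_succ, pow_mul, pow_two]
    rwa [Subgroup.mul_mem_cancel_left _ (pow_mem hk2 m)]
  have hk' : k' ∉ (unitsNorm E LE).range := fun h => hkodd (hmap _ h)
  have hx0 : x ≠ 0 := by
    rintro rfl
    obtain ⟨t, ht, h⟩ := hx
    rw [Algebra.norm_zero] at h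
    exact ht (Algebra.norm_eq_zero_iff.1 h)
  obtain ⟨y, rfl⟩ : ∃ y : Eˣ, (y : E) = x := ⟨Units.mk0 x hx0, rfl⟩
  rw [mem_normGroup_iff]
  by_contra hy
  have hyk : y * k' ∈ (unitsNorm E LE).range :=
    (Subgroup.mul_mem_iff_of_index_two hEidx).2 (iff_of_false hy hk')
  have hNyk := hmap _ hyk
  have hNy : unitsNorm K E y ∈ (unitsNorm K L).range := (mem_normGroup_iff (unitsNorm K E y)).1 hx
  rw [map_mul, Subgroup.mul_mem_cancel_left _ hNy] at hNyk
  exact hkodd hNyk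

end OddDegree

/-- The norm of `x - α` is the value at `x` of the minimal polynomial of a primitive `α`. -/
theorem norm_algebraMap_sub_eq_eval {K E : Type*} [Field K] [Field E] [Algebra K E]
    [FiniteDimensional K E] {α : E} {f : K[X]} (hf : f.Monic) (hirr : Irreducible f)
    (hdeg : f.natDegree = finrank K E) (hα : aeval α f = 0) (x : K) :
    Algebra.norm K (algebraMap K E x - α) = f.eval x := by
  have hmin : f = minpoly K α := minpoly.eq_of_irreducible_of_monic hirr hα hf
  let b := Module.finBasis K E
  have hchar : (Algebra.leftMulMatrix b α).charpoly = f := by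
    apply eq_of_monic_of_dvd_of_natDegree_le hf (Matrix.charpoly_monic _)
    · rw [hmin, minpoly.dvd_iff]
      have := Matrix.aeval_self_charpoly (Algebra.leftMulMatrix b α)
      rw [aeval_algHom_apply] at this
      exact Algebra.leftMulMatrix_injective b (by simpa using this)
    · rw [Matrix.charpoly_natDegree_eq_dim, hdeg, Fintype.card_fin]
  rw [← hchar, Matrix.eval_charpoly, Algebra.norm_eq_matrix_det b, map_sub]
  congr 2
  rw [AlgHom.commutes, Matrix.algebraMap_eq_diagonal]
  rfl

/-- Lemma 7.1 (the irreducible cubic case): let `K` be a `p`-adic field,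
`f = X³ + aX² + bX + c` irreducible over `K`, `α` a root of `f` with `E = K(α)`
(of degree 3), `d ∈ K*` a non-square, `L = K(√d)`, and `LE` the compositum of `L` and `E`
(a quadratic extension of `E` containing `√d`). Then for every `x ∈ K`:
`x - α ∈ N_{LE/E}((LE)*)` if and only if `f(x) ∈ N_{L/K}(L*)`; in particular, if
`f(x) ∈ N_{L/K}(L*)` then `x - α` is a norm from `LE` to `E`. -/
theorem stmt_19 (p : ℕ) [Fact p.Prime]
    (K : Type*) [Field K] [Algebra ℚ_[p] K] [FiniteDimensional ℚ_[p] K]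
    (a b c : K)
    (hirr : Irreducible (X ^ 3 + C a * X ^ 2 + C b * X + C c : K[X]))
    (E : Type*) [Field E] [Algebra K E] (hE3 : finrank K E = 3)
    (α : E)
    (hα : α ^ 3 + algebraMap K E a * α ^ 2 + algebraMap K E b * α + algebraMap K E c = 0)
    (d : K) (hd0 : d ≠ 0) (hd : ¬ IsSquare d)
    (L : Type*) [Field L] [Algebra K L] (hL2 : finrank K L = 2)
    (hLd : ∃ s : L, s ^ 2 = algebraMap K L d)
    (LE : Type*) [Field LE] [Algebra E LE] [Algebra K LE] [IsScalarTower K E LE]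
    (hLE2 : finrank E LE = 2)
    (hLEd : ∃ s : LE, s ^ 2 = algebraMap K LE d) :
    (∀ x : K, (algebraMap K E x - α ∈ normGroup E LE ↔
        x ^ 3 + a * x ^ 2 + b * x + c ∈ normGroup K L)) ∧
    (∀ x : K, x ^ 3 + a * x ^ 2 + b * x + c ∈ normGroup K L →
        algebraMap K E x - α ∈ normGroup E LE) := by
  have : FiniteDimensional K E := Module.finite_of_finrank_pos (by omega)
  have hmonic : (X ^ 3 + C a * X ^ 2 + C b * X + C c : K[X]).Monic := by monicity!
  have hdeg : (X ^ 3 + C a * X ^ 2 + C b * X + C c : K[X]).natDegree = finrank K E := by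
    rw [hE3]
    compute_degree!
  have hmain : ∀ x : K, (algebraMap K E x - α ∈ normGroup E LE ↔
      x ^ 3 + a * x ^ 2 + b * x + c ∈ normGroup K L) := by
    intro x
    rw [mem_normGroup_iff_norm_mem_normGroup p (hE3 ▸ by decide) hd0 hd hL2 hLd hLE2 hLEd,
      norm_algebraMap_sub_eq_eval hmonic hirr hdeg (by simpa using hα)]
    simp
  exact ⟨hmain, fun x => (hmain x).2⟩
end
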